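/- Let η be a probability on ℤ₊ with η(1) < 1, mean Σᵢ i·η(i) = 1 and variance σ² ∈ (0,∞), and assume the law of ξ, defined by ℙ(ξ = i−1) = η(i) for i ≥ 0, has support not contained in any coset a + dℤ with d ≥ 2. Let w(n) = (1/n)·ℙ(S_n = −1), where S_n is the sum of n i.i.d. copies of ξ (by the Otter–Dwass formula, w(n) is the probability that a η-Galton–Watson tree has exactly n vertices). For n such that w(n+1) > 0 (which holds for all n large enough), define the probability p_n on 𝒫ₙ by p_n(λ) = η(p(λ))·(p(λ)!/∏_{i≥1} m_i(λ)!)·(∏_{j=1}^{p(λ)} w(λ_j))/w(n+1). Then (p_n) satisfies Hypothesis (H) with γ = 1/2 and ν = (σ/2)·ν_Br: for every bounded continuous f : 𝒮↓ → ℝ, √n·Σ_{λ∈𝒫ₙ} p_n(λ)(1−λ₁/n) f(λ/n) → (σ/2)·(√2/√π)·∫_{1/2}^{1} (1−x)·f((x,1−x,0,0,…))·x^{−3/2}(1−x)^{−3/2} dx as n → ∞. -/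

import Mathlib

open MeasureTheory Filter Real Set

/-- The space `𝒮↓` of nonincreasing nonnegative sequences summing to `1`.
(On this set, the topology of the uniform distance `d(s,s') = supᵢ|sᵢ−s'ᵢ|` coincides with
the product (pointwise) topology inherited from `ℕ → ℝ`, since `sᵢ ≤ 1/(i+1)` uniformly.) -/
def Sdown : Set (ℕ → ℝ) :=
  {s | (∀ i, 0 ≤ s i) ∧ (∀ i j, i ≤ j → s j ≤ s i) ∧ HasSum s 1}

/-- The sequence `(1,0,0,…)`. -/
def oneSeq : ℕ → ℝ := fun i => if i = 0 then 1 else 0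

lemma oneSeq_mem_Sdown : oneSeq ∈ Sdown := by
  refine ⟨fun i => ?_, fun i j hij => ?_, ?_⟩
  · unfold oneSeq; split <;> norm_num
  · unfold oneSeq
    rcases Nat.eq_zero_or_pos j with hj | hj
    · have hi : i = 0 := by omega
      simp [hi, hj]
    · have hj' : j ≠ 0 := by omega
      simp only [hj', if_false]
      split <;> norm_num
  · exact hasSum_ite_eq 0 1

-- Interpret a sequence as an element of `𝒮↓` (junk value `(1,0,0,…)` if it is not in `𝒮↓`).
open Classical in
noncomputable def toSdown (s : ℕ → ℝ) : ↥Sdown :=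
  if h : s ∈ Sdown then ⟨s, h⟩ else ⟨oneSeq, oneSeq_mem_Sdown⟩

/-- `partVec n λ` is the element `λ/n = (λ₁/n, …, λ_p/n, 0, 0, …)` of `𝒮↓`: the parts of the
partition `λ` of `n`, in decreasing order, padded with zeros and divided by `n`. -/
noncomputable def partVec (n : ℕ) (lam : Nat.Partition n) : ℕ → ℝ :=
  fun i => (((lam.parts.sort (· ≤ ·)).reverse.getD i 0 : ℕ) : ℝ) / n

/-- Hypothesis (H) of Haas–Miermont for a sequence of splitting probabilities `(qₙ)`, with
parameters `γ > 0` and `ν` a nonzero σ-finite measure on `𝒮↓` with `∫(1−s₁)ν(ds) < ∞` and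
`ν({(1,0,…)}) = 0`: for every bounded continuous `f : 𝒮↓ → ℝ`,
`n^γ Σ_{λ∈𝒫ₙ} qₙ(λ)(1−λ₁/n) f(λ/n) → ∫_{𝒮↓} (1−s₁) f(s) ν(ds)`. -/
def HypH (q : ∀ n, Nat.Partition n → ℝ) (γ : ℝ) (ν : Measure ↥Sdown) : Prop :=
  ∀ f : ↥Sdown → ℝ, Continuous f → (∃ C, ∀ s, |f s| ≤ C) →
    Tendsto (fun n : ℕ => (n : ℝ) ^ γ * ∑ lam : Nat.Partition n,
        q n lam * (1 - partVec n lam 0) * f (toSdown (partVec n lam)))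
      atTop (nhds (∫ s, (1 - s.1 0) * f s ∂ν))

/-- The sequence `(x, 1−x, 0, 0, …)`. -/
noncomputable def pairSeq (x : ℝ) : ℕ → ℝ :=
  fun i => if i = 0 then x else if i = 1 then 1 - x else 0

/-!
Multiplying the law of the partition `λ` by `D(λ) = ∑ λᵢ (n - λᵢ)` amounts to marking two parts
`a`, `b` of `λ`, weighted by `a b`. Removing them gives an exact identity: the multiset `μ` of the
other parts carries a finite weight which does not depend on `n`, of total mass
`∑ p (p - 1) η(p) = σ²`, and given `μ` the pair `(a, b)` carries the convolution of `k w(k)` with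
itself at `n - |μ|`. By the local limit theorem `k w(k) ~ (σ √(2 π k))⁻¹`, so this convolution is a
Riemann sum for `(2 π σ²)⁻¹ ∫₀¹ dx / √(x (1 - x))`, and for fixed `μ` one has
`λ / n → (max x (1 - x), min x (1 - x), 0, …)` and `D(λ) / n² → 2 x (1 - x)` along `a / n → x`.
Since `D(λ) ≥ n² (1 - λ₁ / n)`, the functional `n² (1 - λ₁ / n) f(λ / n) / D(λ)` is bounded and
dominated convergence over `μ` applies.

The weight `w` has total mass `1` because it is the hitting law of `-1` for a critical random walk:
its mass `q` is a fixed point of the generating function of `η`, hence `q = 1` by strict convexity.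
-/

section LocalLimit

open ProbabilityTheory

theorem tendsto_intervalIntegral_of_dominated {F : ℕ → ℝ → ℂ} {f : ℝ → ℂ} {g : ℝ → ℝ} {r : ℕ → ℝ}
    (hr : Tendsto r atTop atTop) (hF : ∀ n, Continuous (F n)) (hg : Integrable g)
    (hFg : ∀ᶠ n in atTop, ∀ x, |x| ≤ r n → ‖F n x‖ ≤ g x)
    (hlim : ∀ x, Tendsto (fun n => F n x) atTop (nhds (f x))) :
    Tendsto (fun n => ∫ x in -r n..r n, F n x) atTop (nhds (∫ x, f x)) := by
  have hind : Tendsto (fun n => ∫ x, (Ioc (-r n) (r n)).indicator (F n) x) atTop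
      (nhds (∫ x, f x)) := by
    refine tendsto_integral_filter_of_dominated_convergence (fun x => |g x|)
      (.of_forall fun n => (hF n).aestronglyMeasurable.indicator measurableSet_Ioc) ?_ hg.abs
      (.of_forall fun x => ?_)
    · filter_upwards [hFg] with n hn
      refine .of_forall fun x => ?_
      by_cases hx : x ∈ Ioc (-r n) (r n)
      · simpa only [indicator_of_mem hx] using
          (hn x (abs_le.2 ⟨hx.1.le, hx.2⟩)).trans (le_abs_self _)
      · simp only [indicator_of_notMem hx, norm_zero, abs_nonneg]
    · refine (hlim x).congr' ?_
      filter_upwards [hr.eventually_gt_atTop |x|] with n hn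
      rw [indicator_of_mem (show x ∈ Ioc (-r n) (r n) from
        ⟨(abs_lt.1 hn).1, (abs_lt.1 hn).2.le⟩)]
  refine hind.congr' ?_
  filter_upwards [hr.eventually_ge_atTop 0] with n hn
  rw [integral_indicator measurableSet_Ioc, intervalIntegral.integral_of_le (by linarith)]

theorem sinc_pi_mul_intCast (k : ℤ) : sinc (π * k) = if k = 0 then 1 else 0 := by
  split_ifs with hk
  · simp [hk]
  · rw [sinc_of_ne_zero (mul_ne_zero pi_ne_zero (by exact_mod_cast hk)), mul_comm, sin_int_mul_pi,
      zero_div]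

theorem exists_two_le_forall_dvd_of_mul_eq_two_pi_mul {t : ℝ} (ht0 : t ≠ 0) (htpi : |t| ≤ π) :
    ∃ d : ℤ, 2 ≤ d ∧ ∀ m n : ℤ, m * t = n * (2 * π) → d ∣ m := by
  let K := (AddSubgroup.zmultiples (2 * π)).comap
    ((AddMonoidHom.mulRight t).comp (Int.castAddHom ℝ))
  have hK : ∀ m : ℤ, m ∈ K ↔ ∃ n : ℤ, m * t = n * (2 * π) := fun m => by
    simp [K, AddSubgroup.mem_zmultiples_iff, eq_comm]
  obtain ⟨g, hg⟩ := Int.subgroup_cyclic K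
  have hdvd : ∀ m : ℤ, m ∈ K ↔ g ∣ m := fun m => by
    rw [hg, ← AddSubgroup.zmultiples_eq_closure, Int.mem_zmultiples_iff]
  have hone : (1 : ℤ) ∉ K := by
    rw [hK]
    rintro ⟨n, hn⟩
    rw [Int.cast_one, one_mul] at hn
    have hn0 : n ≠ 0 := by rintro rfl; exact ht0 (by simpa using hn)
    have hn1 : (1 : ℝ) ≤ |(n : ℝ)| := by exact_mod_cast Int.one_le_abs hn0
    rw [hn, abs_mul, abs_of_pos two_pi_pos] at htpi
    nlinarith [pi_pos]
  have hg1 : ¬g ∣ 1 := (hdvd 1).not.1 hone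
  rcases eq_or_ne g 0 with rfl | hg0
  · exact ⟨2, le_rfl, fun m n hmn => (zero_dvd_iff.1 ((hdvd m).1 ((hK m).2 ⟨n, hmn⟩))) ▸ dvd_zero 2⟩
  · refine ⟨|g|, ?_, fun m n hmn => (abs_dvd g m).2 ((hdvd m).1 ((hK m).2 ⟨n, hmn⟩))⟩
    have hne : |g| ≠ 1 := fun h => hg1 ((abs_dvd g 1).1 (by rw [h]))
    have := Int.one_le_abs hg0
    omega

theorem exists_forall_le_exp_neg_mul_sq {f : ℝ → ℝ} (hf : Continuous f) {a δ r : ℝ} (ha : 0 < a)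
    (hδ : 0 < δ) (hr : 0 < r) (hnear : ∀ t, |t| < δ → f t ≤ rexp (-a * t ^ 2))
    (hlt : ∀ t ≠ 0, |t| ≤ r → f t < 1) :
    ∃ c > 0, ∀ t, |t| ≤ r → f t ≤ rexp (-c * t ^ 2) := by
  have hfar : ∃ ρ < 1, ∀ t, δ ≤ |t| → |t| ≤ r → f t ≤ ρ := by
    have hcompact : IsCompact ({t : ℝ | δ ≤ |t|} ∩ Icc (-r) r) :=
      isCompact_Icc.inter_left (isClosed_le continuous_const continuous_abs)
    rcases ({t : ℝ | δ ≤ |t|} ∩ Icc (-r) r).eq_empty_or_nonempty with hempty | hne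
    · exact ⟨0, one_pos, fun t h1 h2 => absurd ⟨h1, abs_le.1 h2⟩ (hempty ▸ notMem_empty t)⟩
    · obtain ⟨s, hs, hmax⟩ := hcompact.exists_isMaxOn hne hf.continuousOn
      exact ⟨f s, hlt s (abs_pos.1 (hδ.trans_le hs.1)) (abs_le.2 hs.2),
        fun t h1 h2 => hmax ⟨h1, abs_le.1 h2⟩⟩
  obtain ⟨ρ, hρ, hfar⟩ := hfar
  refine ⟨min a ((1 - ρ) / r ^ 2), lt_min ha (div_pos (sub_pos.2 hρ) (by positivity)),
    fun t ht => ?_⟩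
  rcases lt_or_ge |t| δ with hδt | hδt
  · refine (hnear t hδt).trans (exp_le_exp.2 ?_)
    nlinarith [min_le_left a ((1 - ρ) / r ^ 2), sq_nonneg t]
  · have hc : min a ((1 - ρ) / r ^ 2) * t ^ 2 ≤ 1 - ρ := calc
      _ ≤ (1 - ρ) / r ^ 2 * r ^ 2 :=
          mul_le_mul (min_le_right _ _) (sq_le_sq.2 (by rwa [abs_of_pos hr])) (sq_nonneg t)
            (div_nonneg (sub_nonneg.2 hρ.le) (sq_nonneg r))
      _ = 1 - ρ := div_mul_cancel₀ _ (by positivity)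
    linarith [hfar t hδt ht, add_one_le_exp (-min a ((1 - ρ) / r ^ 2) * t ^ 2)]

variable {Ω : Type*} {mΩ : MeasurableSpace Ω} {P : Measure Ω}

theorem charFun_map_eq_charFun_map_inv_mul {X : Ω → ℝ} (hX : AEMeasurable X P) {σ : ℝ} (hσ : σ ≠ 0)
    (t : ℝ) : charFun (P.map X) t = charFun (P.map fun ω => σ⁻¹ * X ω) (σ * t) := by
  rw [charFun_map_mul_comp hX, inv_mul_cancel_left₀ hσ]

theorem integral_inv_mul_sq_eq_one {X : Ω → ℝ} {σ : ℝ} (hσ : σ ≠ 0)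
    (h2 : P[X ^ 2] = σ ^ 2) : P[(fun ω => σ⁻¹ * X ω) ^ 2] = 1 := by
  simp only [Pi.pow_apply, mul_pow] at h2 ⊢
  rw [integral_const_mul, h2]
  field_simp

variable [IsProbabilityMeasure P]

theorem integral_charFun_eq_two_pi_mul_measureReal {Y : Ω → ℤ} (hY : Measurable Y) :
    ∫ t in -π..π, charFun (P.map fun ω => (Y ω : ℝ)) t = 2 * π * P.real {ω | Y ω = 0} := by
  have hYr : AEMeasurable (fun ω => (Y ω : ℝ)) P :=
    (measurable_from_top.comp hY).aemeasurable
  have : IsProbabilityMeasure (P.map fun ω => (Y ω : ℝ)) := Measure.isProbabilityMeasure_map hYr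
  rw [integral_charFun_Icc pi_pos, integral_map hYr (by fun_prop)]
  have hsinc : (fun ω => sinc (π * Y ω)) = {ω | Y ω = 0}.indicator 1 := by
    ext ω
    simp [sinc_pi_mul_intCast, indicator_apply]
  have hmeas : MeasurableSet {ω | Y ω = 0} := hY (measurableSet_singleton 0)
  rw [hsinc, integral_indicator_one hmeas]

theorem integral_charFun_pow_mul_exp {X : ℕ → Ω → ℤ} (hX : ∀ i, Measurable (X i))
    (hindep : iIndepFun X P) (hident : ∀ i, IdentDistrib (X i) (X 0) P P) (n : ℕ) (k : ℤ) :
    ∫ t in -π..π, charFun (P.map fun ω => (X 0 ω : ℝ)) t ^ n * Complex.exp (-(k * t * Complex.I)) =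
      2 * π * P.real {ω | ∑ i ∈ Finset.range n, X i ω = k} := by
  have hXr : ∀ i, Measurable fun ω => (X i ω : ℝ) := fun i => measurable_from_top.comp (hX i)
  have hsum : Measurable fun ω => ∑ i ∈ Finset.range n, X i ω :=
    Finset.measurable_sum _ fun i _ => hX i
  have hindepr : iIndepFun (fun i ω => (X i ω : ℝ)) P :=
    hindep.comp (fun _ m => (m : ℝ)) fun _ => measurable_from_top
  have hinv := integral_charFun_eq_two_pi_mul_measureReal (P := P) (hsum.sub_const k)
  simp only [sub_eq_zero] at hinv
  rw [← hinv]
  congr 1 with t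
  have hmap : P.map (fun ω => ((∑ i ∈ Finset.range n, X i ω - k : ℤ) : ℝ)) =
      (P.map fun ω => ∑ i ∈ Finset.range n, (X i ω : ℝ)).map (· + (-k : ℝ)) := by
    rw [Measure.map_map (by fun_prop) (by fun_prop)]
    congr 1 with ω
    simp [sub_eq_add_neg]
  rw [hmap, charFun_map_add_const, (hindepr.restrict _).charFun_map_fun_finsetSum_eq_prod
    fun i _ => (hXr i).aemeasurable]
  have hlaw : ∀ i, P.map (fun ω => (X i ω : ℝ)) = P.map fun ω => (X 0 ω : ℝ) := fun i =>
    ((hident i).comp measurable_from_top).map_eq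
  simp [hlaw, mul_comm]

theorem norm_charFun_lt_one {X : Ω → ℤ} (hX : Measurable X)
    (haper : ¬∃ a d : ℤ, 2 ≤ d ∧ ∀ᵐ ω ∂P, d ∣ X ω - a) {t : ℝ} (ht0 : t ≠ 0) (htpi : |t| ≤ π) :
    ‖charFun (P.map fun ω => (X ω : ℝ)) t‖ < 1 := by
  have hXr : Measurable fun ω => (X ω : ℝ) := measurable_from_top.comp hX
  rw [charFun_apply_real, integral_map hXr.aemeasurable (by fun_prop)]
  have hnorm : ∀ ω, ‖Complex.exp (t * (X ω : ℝ) * Complex.I)‖ ≤ 1 := fun ω => by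
    rw [← Complex.ofReal_mul, Complex.norm_exp_ofReal_mul_I]
  rcases ae_eq_const_or_norm_integral_lt_of_norm_le_const (μ := P) (.of_forall hnorm)
    with hconst | hlt
  · obtain ⟨d, hd, hdvd⟩ := exists_two_le_forall_dvd_of_mul_eq_two_pi_mul ht0 htpi
    obtain ⟨ω₀, hω₀⟩ := hconst.exists
    refine absurd ⟨X ω₀, d, hd, ?_⟩ haper
    filter_upwards [hconst] with ω hω
    obtain ⟨n, hn⟩ := Complex.exp_eq_exp_iff_exists_int.1 (hω.trans hω₀.symm)
    refine hdvd _ n ?_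
    have hre : t * X ω = t * X ω₀ + n * (2 * π) := by
      have := congrArg Complex.im hn
      simpa using this
    push_cast
    linarith
  · simpa using hlt

theorem tendsto_charFun_inv_sqrt_mul_pow_of_sq {X : Ω → ℝ} (hX : AEMeasurable X P) (h0 : P[X] = 0)
    {σ : ℝ} (hσ : 0 < σ) (h2 : P[X ^ 2] = σ ^ 2) (t : ℝ) :
    Tendsto (fun n : ℕ => charFun (P.map X) ((√n)⁻¹ * t) ^ n) atTop
      (nhds (Complex.exp (-(σ * t) ^ 2 / 2))) := by
  simp_rw [charFun_map_eq_charFun_map_inv_mul hX hσ.ne', mul_left_comm σ]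
  exact_mod_cast tendsto_charFun_inv_sqrt_mul_pow (hX.const_mul σ⁻¹)
    (by rw [integral_const_mul, h0, mul_zero]) (integral_inv_mul_sq_eq_one hσ.ne' h2) (σ * t)

theorem exists_norm_charFun_le_exp_near_zero {X : Ω → ℝ} (hX : AEMeasurable X P) (h0 : P[X] = 0)
    (h2 : P[X ^ 2] = 1) :
    ∃ δ > 0, ∀ t, |t| < δ → ‖charFun (P.map X) t‖ ≤ rexp (-(1 / 4) * t ^ 2) := by
  have hnear := (taylor_charFun_two hX h0 h2).bound (c := 1 / 4) (by norm_num)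
  have hsmall : ∀ᶠ t : ℝ in nhds 0, |t| < 1 :=
    continuous_abs.continuousAt.eventually_lt_const (by simp)
  obtain ⟨δ, hδ, hball⟩ := Metric.eventually_nhds_iff.1 (hnear.and hsmall)
  refine ⟨δ, hδ, fun t ht => ?_⟩
  obtain ⟨htaylor, ht1⟩ := hball (by simpa using ht)
  have ht2 : t ^ 2 ≤ 1 := (sq_le_one_iff_abs_le_one t).2 ht1.le
  have hmain : ‖(1 - t ^ 2 / 2 : ℂ)‖ = 1 - t ^ 2 / 2 := by
    rw [show (1 - t ^ 2 / 2 : ℂ) = ((1 - t ^ 2 / 2 : ℝ) : ℂ) by push_cast; ring,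
      Complex.norm_of_nonneg (by linarith)]
  calc ‖charFun (P.map X) t‖
      ≤ ‖(1 - t ^ 2 / 2 : ℂ)‖ + ‖charFun (P.map X) t - (1 - t ^ 2 / 2)‖ :=
        norm_le_norm_add_norm_sub' _ _
    _ ≤ (1 - t ^ 2 / 2) + 1 / 4 * t ^ 2 := by
        rw [hmain]
        gcongr
        simpa using htaylor
    _ = -(1 / 4) * t ^ 2 + 1 := by ring
    _ ≤ rexp (-(1 / 4) * t ^ 2) := add_one_le_exp _

theorem exists_norm_charFun_le_exp {X : Ω → ℤ} (hX : Measurable X) (h0 : ∫ ω, (X ω : ℝ) ∂P = 0)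
    {σ : ℝ} (hσ : 0 < σ) (h2 : ∫ ω, (X ω : ℝ) ^ 2 ∂P = σ ^ 2)
    (haper : ¬∃ a d : ℤ, 2 ≤ d ∧ ∀ᵐ ω ∂P, d ∣ X ω - a) :
    ∃ c > 0, ∀ t, |t| ≤ π → ‖charFun (P.map fun ω => (X ω : ℝ)) t‖ ≤ rexp (-c * t ^ 2) := by
  have hXr : Measurable fun ω => (X ω : ℝ) := measurable_from_top.comp hX
  have : IsProbabilityMeasure (P.map fun ω => (X ω : ℝ)) :=
    Measure.isProbabilityMeasure_map hXr.aemeasurable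
  obtain ⟨δ, hδ, hnear⟩ := exists_norm_charFun_le_exp_near_zero (hXr.aemeasurable.const_mul σ⁻¹)
    (by rw [integral_const_mul, h0, mul_zero]) (integral_inv_mul_sq_eq_one hσ.ne' h2)
  refine exists_forall_le_exp_neg_mul_sq (a := σ ^ 2 / 4) (δ := δ / σ) continuous_charFun.norm
    (by positivity) (by positivity) pi_pos (fun t ht => ?_)
    fun t ht htpi => norm_charFun_lt_one hX haper ht htpi
  rw [charFun_map_eq_charFun_map_inv_mul hXr.aemeasurable hσ.ne']
  refine (hnear (σ * t) ?_).trans_eq (by ring_nf)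
  rwa [abs_mul, abs_of_pos hσ, ← lt_div_iff₀' hσ]

theorem tendsto_intervalIntegral_charFun_pow_mul_exp {X : Ω → ℤ} (hX : Measurable X)
    (h0 : ∫ ω, (X ω : ℝ) ∂P = 0) {σ : ℝ} (hσ : 0 < σ) (h2 : ∫ ω, (X ω : ℝ) ^ 2 ∂P = σ ^ 2)
    (haper : ¬∃ a d : ℤ, 2 ≤ d ∧ ∀ᵐ ω ∂P, d ∣ X ω - a) (k : ℤ) :
    Tendsto (fun n : ℕ => ∫ x in -(√n * π)..√n * π,
      charFun (P.map fun ω => (X ω : ℝ)) ((√n)⁻¹ * x) ^ n *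
        Complex.exp (-(k * ((√n)⁻¹ * x : ℝ) * Complex.I))) atTop
      (nhds (∫ x : ℝ, Complex.exp (-(σ * x) ^ 2 / 2))) := by
  have hXr : Measurable fun ω => (X ω : ℝ) := measurable_from_top.comp hX
  have : IsProbabilityMeasure (P.map fun ω => (X ω : ℝ)) :=
    Measure.isProbabilityMeasure_map hXr.aemeasurable
  have : Continuous (charFun (P.map fun ω => (X ω : ℝ))) := continuous_charFun
  obtain ⟨c, hc, hbound⟩ := exists_norm_charFun_le_exp hX h0 hσ h2 haper
  have hsqrt : Tendsto (fun n : ℕ => √(n : ℝ)) atTop atTop :=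
    tendsto_sqrt_atTop.comp tendsto_natCast_atTop_atTop
  refine tendsto_intervalIntegral_of_dominated (hsqrt.atTop_mul_const pi_pos)
    (fun n => by fun_prop) (integrable_exp_neg_mul_sq hc) ?_ fun x => ?_
  · filter_upwards [eventually_gt_atTop 0] with n hn x hx
    have hn0 : (0 : ℝ) < √n := sqrt_pos.2 (by exact_mod_cast hn)
    have hx' : |(√n)⁻¹ * x| ≤ π := by
      rwa [abs_mul, abs_of_pos (inv_pos.2 hn0), inv_mul_le_iff₀ hn0]
    have hexp : ‖Complex.exp (-(k * ((√n)⁻¹ * x : ℝ) * Complex.I))‖ = 1 := by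
      rw [← Complex.norm_exp_ofReal_mul_I (-(k * ((√n)⁻¹ * x)))]
      push_cast
      ring_nf
    rw [norm_mul, hexp, mul_one, norm_pow]
    calc ‖charFun (P.map fun ω => (X ω : ℝ)) ((√n)⁻¹ * x)‖ ^ n
          ≤ rexp (-c * ((√n)⁻¹ * x) ^ 2) ^ n := by
            gcongr
            exact hbound _ hx'
      _ = rexp (-c * x ^ 2) := by
          rw [← exp_nat_mul, mul_pow, inv_pow, sq_sqrt (by positivity)]
          field_simp
  · have hto0 : Tendsto (fun n : ℕ => (√n)⁻¹ * x) atTop (nhds 0) := by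
      simpa using (tendsto_inv_atTop_zero.comp hsqrt).mul_const x
    have hphase : Continuous fun y : ℝ => Complex.exp (-(k * y * Complex.I)) := by fun_prop
    simpa using (tendsto_charFun_inv_sqrt_mul_pow_of_sq hXr.aemeasurable h0 hσ h2 x).mul
      ((hphase.tendsto 0).comp hto0)

theorem intervalIntegral_charFun_pow_mul_exp_inv_sqrt_mul {X : ℕ → Ω → ℤ}
    (hX : ∀ i, Measurable (X i)) (hindep : iIndepFun X P)
    (hident : ∀ i, IdentDistrib (X i) (X 0) P P) {n : ℕ} (hn : 0 < n) (k : ℤ) :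
    ∫ x in -(√n * π)..√n * π, charFun (P.map fun ω => (X 0 ω : ℝ)) ((√n)⁻¹ * x) ^ n *
        Complex.exp (-(k * ((√n)⁻¹ * x : ℝ) * Complex.I)) =
      ((2 * π * (√n * P.real {ω | ∑ i ∈ Finset.range n, X i ω = k}) : ℝ) : ℂ) := by
  have hn0 : √(n : ℝ) ≠ 0 := (sqrt_pos.2 (by exact_mod_cast hn)).ne'
  rw [intervalIntegral.integral_comp_mul_left (fun t : ℝ =>
      charFun (P.map fun ω => (X 0 ω : ℝ)) t ^ n * Complex.exp (-(k * t * Complex.I)))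
      (inv_ne_zero hn0), mul_neg, inv_mul_cancel_left₀ hn0,
    integral_charFun_pow_mul_exp hX hindep hident, inv_inv, Complex.real_smul]
  push_cast
  ring

theorem integral_cexp_neg_mul_sq_div_two {σ : ℝ} (hσ : 0 < σ) :
    ∫ x : ℝ, Complex.exp (-(σ * x) ^ 2 / 2) = ((√(2 * π) / σ : ℝ) : ℂ) := by
  have hcast : (fun x : ℝ => Complex.exp (-(σ * x) ^ 2 / 2)) =
      fun x => ((rexp (-(σ ^ 2 / 2) * x ^ 2) : ℝ) : ℂ) := by
    ext x
    push_cast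
    ring_nf
  rw [hcast, integral_complex_ofReal, integral_gaussian,
    show π / (σ ^ 2 / 2) = 2 * π / σ ^ 2 by field_simp, sqrt_div (by positivity), sqrt_sq hσ.le]

theorem tendsto_sqrt_mul_measureReal_sum_eq {X : ℕ → Ω → ℤ} (hX : ∀ i, Measurable (X i))
    (hindep : iIndepFun X P) (hident : ∀ i, IdentDistrib (X i) (X 0) P P)
    (h0 : ∫ ω, (X 0 ω : ℝ) ∂P = 0) {σ : ℝ} (hσ : 0 < σ)
    (h2 : ∫ ω, (X 0 ω : ℝ) ^ 2 ∂P = σ ^ 2)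
    (haper : ¬∃ a d : ℤ, 2 ≤ d ∧ ∀ᵐ ω ∂P, d ∣ X 0 ω - a) (k : ℤ) :
    Tendsto (fun n : ℕ => √n * P.real {ω | ∑ i ∈ Finset.range n, X i ω = k}) atTop
      (nhds (1 / (σ * √(2 * π)))) := by
  have hlim := tendsto_intervalIntegral_charFun_pow_mul_exp (hX 0) h0 hσ h2 haper k
  rw [integral_cexp_neg_mul_sq_div_two hσ] at hlim
  have hreal : Tendsto (fun n : ℕ => 2 * π * (√n * P.real {ω | ∑ i ∈ Finset.range n, X i ω = k}))
      atTop (nhds (√(2 * π) / σ)) := by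
    refine ((Complex.continuous_re.tendsto _).comp hlim).congr' ?_
    filter_upwards [eventually_gt_atTop 0] with n hn
    rw [Function.comp_apply, intervalIntegral_charFun_pow_mul_exp_inv_sqrt_mul hX hindep hident hn,
      Complex.ofReal_re]
  have hconst : (2 * π)⁻¹ * (√(2 * π) / σ) = 1 / (σ * √(2 * π)) := by
    nth_rewrite 1 [← mul_self_sqrt two_pi_pos.le]
    field_simp
  rw [← hconst]
  simpa only [inv_mul_cancel_left₀ two_pi_pos.ne'] using hreal.const_mul (2 * π)⁻¹

end LocalLimit

section HittingWeight

open PowerSeries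

/-- For an offspring law `η` with generating series `F`, the weight `(p / n) [Xⁿ⁻ᵖ] Fⁿ`: by the
cycle lemma, the probability that a forest of `p` independent `η`-Galton–Watson trees has `n`
vertices, i.e. that the associated random walk first hits `-p` at time `n`. The coefficient is
written `[Xⁿ] Xᵖ Fⁿ` so that it vanishes for `n < p`. -/
noncomputable def hittingWeight (η : ℕ → ℝ) (p n : ℕ) : ℝ :=
  if n = 0 then (if p = 0 then 1 else 0) else p / n * coeff n (X ^ p * mk η ^ n)

theorem hittingWeight_of_lt (η : ℕ → ℝ) {p n : ℕ} (h : n < p) : hittingWeight η p n = 0 := by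
  rw [hittingWeight, coeff_X_pow_mul', if_neg h.not_ge, mul_zero]
  split_ifs with hn hp <;> first | rfl | omega

theorem hittingWeight_zero_left (η : ℕ → ℝ) (n : ℕ) :
    hittingWeight η 0 n = if n = 0 then 1 else 0 := by
  simp [hittingWeight]

theorem hittingWeight_nonneg {η : ℕ → ℝ} (h0 : ∀ i, 0 ≤ η i) (p n : ℕ) :
    0 ≤ hittingWeight η p n := by
  have hcoeff (m : ℕ) : 0 ≤ coeff m (mk η ^ n) := by
    rw [coeff_pow]
    exact Finset.sum_nonneg fun l _ => Finset.prod_nonneg fun i _ => by simpa using h0 _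
  rw [hittingWeight, coeff_X_pow_mul']
  split_ifs
  exacts [zero_le_one, le_rfl, mul_nonneg (by positivity) (hcoeff _), by simp]

theorem coeff_X_mul_derivative {R : Type*} [CommSemiring R] (F : R⟦X⟧) (n : ℕ) :
    coeff n (X * d⁄dX R F) = n * coeff n F := by
  cases n with
  | zero => simp
  | succ n => rw [coeff_succ_X_mul, coeff_derivative, mul_comm, Nat.cast_succ]

theorem X_mul_derivative_X_pow_mul_pow {R : Type*} [CommSemiring R] (F : R⟦X⟧) (p n : ℕ) :
    X * d⁄dX R (X ^ p * F ^ (n + 1))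
      = C (p : R) * (X ^ p * F ^ (n + 1)) + C (n + 1 : R) * (X * d⁄dX R F * X ^ p * F ^ n) := by
  have hXp : X * d⁄dX R (X ^ p : R⟦X⟧) = C (p : R) * X ^ p := by
    cases p with
    | zero => simp
    | succ p => simp; ring
  have hFn : d⁄dX R (F ^ (n + 1)) = C (n + 1 : R) * F ^ n * d⁄dX R F := by
    simp [mul_assoc]
  calc X * d⁄dX R (X ^ p * F ^ (n + 1))
      = X * d⁄dX R (X ^ p : R⟦X⟧) * F ^ (n + 1) + X * X ^ p * d⁄dX R (F ^ (n + 1)) := by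
        rw [Derivation.leibniz, smul_eq_mul, smul_eq_mul]; ring
    _ = _ := by rw [hXp, hFn]; ring

theorem coeff_mul_X_pow_mul_eq_sum_range {R : Type*} [CommSemiring R] (A B : R⟦X⟧) (p : ℕ)
    {n N : ℕ} (hn : n < N) :
    coeff n (A * X ^ p * B) = ∑ j ∈ Finset.range N, coeff j A * coeff n (X ^ (p + j) * B) := by
  have hterm (j : ℕ) : coeff n (X ^ (p + j) * B)
      = if j ≤ n then coeff (n - j) (X ^ p * B) else 0 := by
    rw [add_comm, pow_add, mul_assoc, coeff_X_pow_mul']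
  rw [mul_assoc, coeff_mul, Finset.Nat.sum_antidiagonal_eq_sum_range_succ_mk]
  refine Finset.sum_subset_zero_on_sdiff (Finset.range_subset_range.2 hn) (fun j hj => ?_)
    fun j hj => ?_
  · have : ¬j ≤ n := fun h => (Finset.mem_sdiff.1 hj).2 (Finset.mem_range_succ_iff.2 h)
    rw [hterm, if_neg this, mul_zero]
  · rw [hterm, if_pos (Finset.mem_range_succ_iff.1 hj)]

-- Differentiating `Xᵖ Fⁿ⁺¹` turns the factors `(p + j) / n` on the right into `(p + 1) / (n + 1)`.
theorem hittingWeight_succ_succ (η : ℕ → ℝ) (p : ℕ) {n N : ℕ} (hn : n < N) :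
    hittingWeight η (p + 1) (n + 1)
      = ∑ j ∈ Finset.range N, η j * hittingWeight η (p + j) n := by
  set F : ℝ⟦X⟧ := mk η
  have hleft : hittingWeight η (p + 1) (n + 1)
      = (p + 1) / (n + 1) * coeff n (X ^ p * F ^ (n + 1)) := by
    rw [hittingWeight, if_neg n.succ_ne_zero, pow_succ' X p, mul_assoc, coeff_succ_X_mul]
    push_cast; rfl
  rcases Nat.eq_zero_or_pos n with rfl | hn0
  · rw [hleft, Finset.sum_eq_single_of_mem 0 (Finset.mem_range.2 hn) fun j _ hj => by
      simp [hittingWeight, hj]]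
    rcases Nat.eq_zero_or_pos p with rfl | hp
    · simp [hittingWeight, F]
    · simp [hittingWeight, hp.ne']
  have hderiv : ((n : ℝ) + 1) * coeff n (((C (p : ℝ) * F + X * d⁄dX ℝ F) * X ^ p) * F ^ n)
      = (n : ℝ) * (p + 1) * coeff n (X ^ p * F ^ (n + 1)) := by
    have h := congrArg (coeff n) (X_mul_derivative_X_pow_mul_pow F p n)
    rw [coeff_X_mul_derivative, map_add, coeff_C_mul, coeff_C_mul] at h
    rw [show (C (p : ℝ) * F + X * d⁄dX ℝ F) * X ^ p * F ^ n
      = C (p : ℝ) * (X ^ p * F ^ (n + 1)) + X * d⁄dX ℝ F * X ^ p * F ^ n by ring,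
      map_add, coeff_C_mul]
    linear_combination -h
  have hcoeff (j : ℕ) : coeff j (C (p : ℝ) * F + X * d⁄dX ℝ F) = (p + j) * η j := by
    rw [map_add, coeff_C_mul, coeff_X_mul_derivative, coeff_mk, add_mul]
  rw [coeff_mul_X_pow_mul_eq_sum_range _ _ _ hn] at hderiv
  have hn0' : (n : ℝ) ≠ 0 := by positivity
  calc hittingWeight η (p + 1) (n + 1)
      = (n : ℝ)⁻¹ * ∑ j ∈ Finset.range N,
          coeff j (C (p : ℝ) * F + X * d⁄dX ℝ F) * coeff n (X ^ (p + j) * F ^ n) := by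
        rw [hleft]
        field_simp
        linear_combination -hderiv
    _ = ∑ j ∈ Finset.range N, η j * hittingWeight η (p + j) n := by
        rw [Finset.mul_sum]
        refine Finset.sum_congr rfl fun j _ => ?_
        rw [hittingWeight, if_neg hn0.ne', hcoeff]
        push_cast
        ring

theorem sum_antidiagonal_hittingWeight_mul (η : ℕ → ℝ) (p q n : ℕ) :
    ∑ x ∈ Finset.HasAntidiagonal.antidiagonal n, hittingWeight η p x.1 * hittingWeight η q x.2
      = hittingWeight η (p + q) n := by
  induction n generalizing p with
  | zero => rcases p with _ | p <;> simp [hittingWeight]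
  | succ n ih =>
    rw [Finset.Nat.sum_antidiagonal_succ]
    cases p with
    | zero => simp [hittingWeight_zero_left]
    | succ p =>
      rw [hittingWeight_of_lt η p.succ_pos, zero_mul, zero_add, add_right_comm,
        hittingWeight_succ_succ η _ n.lt_succ_self]
      calc ∑ x ∈ Finset.HasAntidiagonal.antidiagonal n,
            hittingWeight η (p + 1) (x.1 + 1) * hittingWeight η q x.2
          = ∑ x ∈ Finset.HasAntidiagonal.antidiagonal n, ∑ j ∈ Finset.range (n + 1),
              η j * (hittingWeight η (p + j) x.1 * hittingWeight η q x.2) :=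
            Finset.sum_congr rfl fun x hx => by
              rw [hittingWeight_succ_succ η _
                (Finset.Nat.antidiagonal.fst_lt hx), Finset.sum_mul]
              simp only [mul_assoc]
        _ = _ := by
            rw [Finset.sum_comm]
            refine Finset.sum_congr rfl fun j _ => ?_
            rw [← Finset.mul_sum, ih, add_right_comm]

theorem exists_two_le_ne_zero_of_mean_eq_one {η : ℕ → ℝ} (hη1 : η 1 < 1)
    (hmean : HasSum (fun i : ℕ => (i : ℝ) * η i) 1) : ∃ j, 2 ≤ j ∧ η j ≠ 0 := by
  by_contra! hη
  have hsingle : HasSum (fun i : ℕ => (i : ℝ) * η i) ((1 : ℕ) * η 1) :=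
    hasSum_single 1 fun j hj => by
      rcases Nat.lt_or_ge j 2 with h | h
      · simp [show j = 0 by omega]
      · rw [hη j h, mul_zero]
  rw [Nat.cast_one, one_mul] at hsingle
  exact hη1.ne (hsingle.unique hmean)

section Mass

variable {η : ℕ → ℝ} (h0 : ∀ i, 0 ≤ η i) (hs : HasSum η 1)
include h0 hs

theorem sum_range_hittingWeight_le_one (p N : ℕ) :
    ∑ n ∈ Finset.range N, hittingWeight η p n ≤ 1 := by
  induction N generalizing p with
  | zero => simp
  | succ N ih =>
    rw [Finset.sum_range_succ']
    cases p with
    | zero => simp [hittingWeight_zero_left]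
    | succ p =>
      rw [hittingWeight_of_lt η p.succ_pos, add_zero]
      calc ∑ n ∈ Finset.range N, hittingWeight η (p + 1) (n + 1)
          = ∑ j ∈ Finset.range N, η j * ∑ n ∈ Finset.range N, hittingWeight η (p + j) n := by
            simp_rw [Finset.mul_sum]
            rw [Finset.sum_comm]
            exact Finset.sum_congr rfl fun n hn =>
              hittingWeight_succ_succ η p (Finset.mem_range.1 hn)
        _ ≤ ∑ j ∈ Finset.range N, η j :=
            Finset.sum_le_sum fun j _ => mul_le_of_le_one_right (h0 j) (ih _)
        _ ≤ 1 := sum_le_hasSum _ (fun i _ => h0 i) hs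

theorem summable_hittingWeight (p : ℕ) : Summable (hittingWeight η p) :=
  summable_of_sum_range_le (hittingWeight_nonneg h0 p) (sum_range_hittingWeight_le_one h0 hs p)

theorem tsum_hittingWeight (p : ℕ) :
    ∑' n, hittingWeight η p n = (∑' n, hittingWeight η 1 n) ^ p := by
  induction p with
  | zero => simp [hittingWeight_zero_left]
  | succ p ih =>
    rw [pow_succ, ← ih, tsum_mul_tsum_eq_tsum_sum_antidiagonal_of_summable_norm
      (summable_hittingWeight h0 hs p).norm (summable_hittingWeight h0 hs 1).norm]
    exact tsum_congr fun n => (sum_antidiagonal_hittingWeight_mul η p 1 n).symm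

theorem tsum_hittingWeight_one_le_one : ∑' n, hittingWeight η 1 n ≤ 1 :=
  (summable_hittingWeight h0 hs 1).tsum_le_of_sum_range_le (sum_range_hittingWeight_le_one h0 hs 1)

theorem hasSum_mul_tsum_hittingWeight_pow :
    HasSum (fun j => η j * (∑' n, hittingWeight η 1 n) ^ j) (∑' n, hittingWeight η 1 n) := by
  set q := ∑' n, hittingWeight η 1 n with hq
  have hq0 : 0 ≤ q := tsum_nonneg (hittingWeight_nonneg h0 1)
  have hsum : Summable fun j => η j * q ^ j :=
    .of_nonneg_of_le (fun j => mul_nonneg (h0 j) (pow_nonneg hq0 j))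
      (fun j => mul_le_of_le_one_right (h0 j)
        (pow_le_one₀ hq0 (tsum_hittingWeight_one_le_one h0 hs))) hs.summable
  have hrow (j : ℕ) : HasSum (fun n => η j * hittingWeight η j n) (η j * q ^ j) := by
    rw [hq, ← tsum_hittingWeight h0 hs]
    exact (summable_hittingWeight h0 hs j).hasSum.mul_left _
  have hcol (n : ℕ) : ∑' j, η j * hittingWeight η j n = hittingWeight η 1 (n + 1) := by
    rw [tsum_eq_sum (s := Finset.range (n + 1)) fun j hj => by
      rw [hittingWeight_of_lt η (by simpa using hj), mul_zero]]
    simpa using (hittingWeight_succ_succ η 0 n.lt_succ_self).symm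
  have hdouble : Summable fun x : ℕ × ℕ => η x.1 * hittingWeight η x.1 x.2 := by
    rw [summable_prod_of_nonneg fun x => mul_nonneg (h0 _) (hittingWeight_nonneg h0 _ _)]
    exact ⟨fun j => (hrow j).summable, by simpa only [(hrow _).tsum_eq] using hsum⟩
  rw [hsum.hasSum_iff]
  calc ∑' j, η j * q ^ j = ∑' j, ∑' n, η j * hittingWeight η j n :=
        tsum_congr fun j => (hrow j).tsum_eq.symm
    _ = ∑' n, ∑' j, η j * hittingWeight η j n :=
        hdouble.prod_symm.tsum_comm (f := fun n j => η j * hittingWeight η j n)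
    _ = q := by
        simp_rw [hcol]
        rw [hq, (summable_hittingWeight h0 hs 1).tsum_eq_zero_add,
          hittingWeight_of_lt η one_pos, zero_add]

-- At criticality the defect `∑ η j (qʲ - 1 - j (q - 1))` vanishes, while Bernoulli's inequality
-- makes every term nonnegative, and positive for some `j ≥ 2` unless `q = 1`.
theorem hasSum_hittingWeight_one (hη1 : η 1 < 1)
    (hmean : HasSum (fun i : ℕ => (i : ℝ) * η i) 1) : HasSum (hittingWeight η 1) 1 := by
  have hfix := hasSum_mul_tsum_hittingWeight_pow h0 hs
  have hsum := (summable_hittingWeight h0 hs 1).hasSum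
  set q := ∑' n, hittingWeight η 1 n with hq
  have hq0 : 0 ≤ q := tsum_nonneg (hittingWeight_nonneg h0 1)
  suffices hq1 : q = 1 by rwa [hq1] at hsum
  by_contra hne
  have hbernoulli (i : ℕ) : 0 ≤ q ^ i - 1 - i * (q - 1) := by
    have := one_add_mul_le_pow (a := q - 1) (by linarith) i
    rw [add_sub_cancel] at this
    linarith
  have hdefect : HasSum (fun i : ℕ => η i * (q ^ i - 1 - i * (q - 1))) 0 := by
    have h := (hfix.sub hs).sub (hmean.mul_right (q - 1))
    rw [one_mul, sub_self] at h
    exact h.congr_fun fun i => by ring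
  obtain ⟨j, hj, hηj⟩ := exists_two_le_ne_zero_of_mean_eq_one hη1 hmean
  have hzero : q ^ j - 1 - j * (q - 1) = 0 := by
    have := congrFun ((hasSum_zero_iff_of_nonneg
      fun i => mul_nonneg (h0 i) (hbernoulli i)).1 hdefect) j
    exact (mul_eq_zero.1 this).resolve_left hηj
  have hstrict := one_add_mul_self_lt_rpow_one_add (s := q - 1) (by linarith) (sub_ne_zero.2 hne)
    (p := (j : ℝ)) (by exact_mod_cast hj)
  rw [Real.rpow_natCast, add_sub_cancel] at hstrict
  linarith

end Mass

end HittingWeight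

section OffspringWalk

open ProbabilityTheory PowerSeries

variable {Ω : Type*} [MeasurableSpace Ω] {P : Measure Ω} [IsProbabilityMeasure P]

theorem measureReal_sum_range_eq_coeff_prod {Y : ℕ → Ω → ℕ} (hY : ∀ i, Measurable (Y i))
    (hindep : iIndepFun Y P) (n m : ℕ) :
    P.real {ω | ∑ i ∈ Finset.range n, Y i ω = m}
      = coeff m (∏ i ∈ Finset.range n, mk fun j => P.real {ω | Y i ω = j}) := by
  induction n generalizing m with
  | zero => by_cases hm : m = 0 <;> simp [hm, coeff_one, Ne.symm]
  | succ n ih =>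
    have hsum : Measurable fun ω => ∑ i ∈ Finset.range n, Y i ω :=
      Finset.measurable_sum _ fun i _ => hY i
    have hunion : {ω | ∑ i ∈ Finset.range (n + 1), Y i ω = m}
        = ⋃ x ∈ Finset.HasAntidiagonal.antidiagonal m,
          {ω | ∑ i ∈ Finset.range n, Y i ω = x.1} ∩ {ω | Y n ω = x.2} := by
      ext ω
      simp [Finset.sum_range_succ]
    have hmul (x : ℕ × ℕ) : P.real ({ω | ∑ i ∈ Finset.range n, Y i ω = x.1} ∩ {ω | Y n ω = x.2})
        = P.real {ω | ∑ i ∈ Finset.range n, Y i ω = x.1} * P.real {ω | Y n ω = x.2} := by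
      have := (hindep.indepFun_sum_range_succ hY n).measure_inter_preimage_eq_mul {x.1} {x.2}
        (measurableSet_singleton _) (measurableSet_singleton _)
      simpa [measureReal_def, Set.preimage] using congrArg ENNReal.toReal this
    rw [hunion, measureReal_biUnion_finset, Finset.prod_range_succ, coeff_mul]
    · exact Finset.sum_congr rfl fun x _ => by rw [hmul, ih, coeff_mk]
    · rintro x - y - hxy
      refine Set.disjoint_left.2 ?_
      rintro ω ⟨h1, h2⟩ ⟨h3, h4⟩
      exact hxy (Prod.ext (h1.symm.trans h3) (h2.symm.trans h4))
    · exact fun x _ => (hsum (measurableSet_singleton _)).inter (hY n (measurableSet_singleton _))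

theorem integral_eq_of_hasSum_measureReal_singleton {α : Type*} [Countable α] [MeasurableSpace α]
    [MeasurableSingletonClass α] {μ : Measure α} [IsFiniteMeasure μ] {f : α → ℝ} {s : ℝ}
    (h : HasSum (fun a => μ.real {a} * f a) s) : ∫ a, f a ∂μ = s := by
  have huniv : ⋃ a : α, {a} = univ := Set.iUnion_of_singleton α
  have hintegrable : Integrable f μ := by
    rw [← integrableOn_univ, ← huniv]
    refine integrableOn_iUnion_of_summable_integral_norm
      (fun a => integrableOn_singleton (by simp)) ?_
    simpa [abs_mul, measureReal_def] using h.summable.abs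
  rw [integral_countable hintegrable]
  simpa using h.tsum_eq

omit [IsProbabilityMeasure P] in
theorem map_real_natCast_sub_one {η : ℕ → ℝ} (hη0 : ∀ i, 0 ≤ η i) {X : Ω → ℤ} (hX : Measurable X)
    (hlaw : ∀ j : ℕ, P {ω | X ω = (j : ℤ) - 1} = ENNReal.ofReal (η j)) (j : ℕ) :
    (P.map X).real {(j : ℤ) - 1} = η j := by
  rw [map_measureReal_apply hX (measurableSet_singleton _), measureReal_def]
  exact (congrArg ENNReal.toReal (hlaw j)).trans (ENNReal.toReal_ofReal (hη0 j))

section Law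

variable {η : ℕ → ℝ} (hη0 : ∀ i, 0 ≤ η i) (hηsum : HasSum η 1) {X : Ω → ℤ} (hX : Measurable X)
  (hlaw : ∀ j : ℕ, P {ω | X ω = (j : ℤ) - 1} = ENNReal.ofReal (η j))
include hη0 hηsum hX hlaw

theorem ae_exists_eq_natCast_sub_one : ∀ᵐ ω ∂P, ∃ j : ℕ, X ω = (j : ℤ) - 1 := by
  have hm (j : ℕ) : MeasurableSet {ω | X ω = (j : ℤ) - 1} := hX (measurableSet_singleton _)
  have hone : P (⋃ j : ℕ, {ω | X ω = (j : ℤ) - 1}) = 1 := by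
    rw [measure_iUnion (fun i j hij => ?_) hm]
    · simp_rw [hlaw]
      rw [← ENNReal.ofReal_tsum_of_nonneg hη0 hηsum.summable, hηsum.tsum_eq, ENNReal.ofReal_one]
    · refine Set.disjoint_left.2 fun ω (hi : X ω = i - 1) (hj : X ω = j - 1) => hij ?_
      omega
  filter_upwards [mem_ae_iff.2 ((prob_compl_eq_zero_iff (.iUnion hm)).2 hone)] with ω hω
  exact mem_iUnion.1 hω

theorem map_real_eq_zero_of_notMem_range {z : ℤ} (hz : z ∉ Set.range fun j : ℕ => (j : ℤ) - 1) :
    (P.map X).real {z} = 0 := by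
  rw [map_measureReal_apply hX (measurableSet_singleton _), measureReal_eq_zero_iff]
  refine measure_mono_null (fun ω hω => ?_)
    (ae_iff.1 (ae_exists_eq_natCast_sub_one hη0 hηsum hX hlaw))
  rintro ⟨j, hj⟩
  exact hz ⟨j, hj.symm.trans hω⟩

theorem integral_comp_eq_of_hasSum {g : ℤ → ℝ} {s : ℝ}
    (h : HasSum (fun j : ℕ => η j * g (j - 1)) s) : ∫ ω, g (X ω) ∂P = s := by
  have : IsProbabilityMeasure (P.map X) := Measure.isProbabilityMeasure_map hX.aemeasurable
  have hinj : Function.Injective fun j : ℕ => (j : ℤ) - 1 := fun i j hij => by simpa using hij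
  rw [← integral_map hX.aemeasurable (measurable_from_top.aestronglyMeasurable (f := g))]
  refine integral_eq_of_hasSum_measureReal_singleton ((hinj.hasSum_iff fun z hz => ?_).1 ?_)
  · rw [map_real_eq_zero_of_notMem_range hη0 hηsum hX hlaw hz, zero_mul]
  · simpa only [Function.comp_def, map_real_natCast_sub_one hη0 hX hlaw] using h

end Law

section Walk

variable {η : ℕ → ℝ} (hη0 : ∀ i, 0 ≤ η i) (hηsum : HasSum η 1) {ξ : ℕ → Ω → ℤ}
  (hξ : ∀ i, Measurable (ξ i)) (hindep : iIndepFun ξ P)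
  (hlaw : ∀ i j : ℕ, P {ω | ξ i ω = (j : ℤ) - 1} = ENNReal.ofReal (η j))
include hη0 hηsum hξ hindep hlaw

theorem measureReal_sum_range_eq_coeff_pow (n m : ℕ) :
    P.real {ω | ∑ i ∈ Finset.range n, ξ i ω = (m : ℤ) - n} = coeff m (mk η ^ n) := by
  let Y (i : ℕ) (ω : Ω) : ℕ := (ξ i ω + 1).toNat
  have hY (i : ℕ) : Measurable (Y i) :=
    (measurable_from_top (f := fun z : ℤ => (z + 1).toNat)).comp (hξ i)
  have hYindep : iIndepFun Y P :=
    hindep.comp (fun _ z => (z + 1).toNat) fun _ => measurable_from_top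
  have hYξ : ∀ᵐ ω ∂P, ∀ i, ξ i ω = Y i ω - 1 := ae_all_iff.2 fun i => by
    filter_upwards [ae_exists_eq_natCast_sub_one hη0 hηsum (hξ i) (hlaw i)] with ω ⟨j, hj⟩
    simp [Y, hj]
  have hYlaw (i j : ℕ) : P.real {ω | Y i ω = j} = η j := by
    rw [← ENNReal.toReal_ofReal (hη0 j), ← hlaw i j, ← measureReal_def]
    refine measureReal_congr (eventuallyEq_set.2 ?_)
    filter_upwards [hYξ] with ω hω
    rw [hω i, sub_left_inj, Nat.cast_inj]
  have hsum : P.real {ω | ∑ i ∈ Finset.range n, ξ i ω = (m : ℤ) - n}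
      = P.real {ω | ∑ i ∈ Finset.range n, Y i ω = m} := by
    refine measureReal_congr (eventuallyEq_set.2 ?_)
    filter_upwards [hYξ] with ω hω
    simp_rw [hω, Finset.sum_sub_distrib, Finset.sum_const, Finset.card_range, nsmul_one,
      sub_left_inj]
    exact_mod_cast Iff.rfl
  rw [hsum, measureReal_sum_range_eq_coeff_prod hY hYindep]
  simp_rw [hYlaw, Finset.prod_const, Finset.card_range]

theorem measureReal_sum_range_eq_neg_one_div (n : ℕ) :
    P.real {ω | ∑ i ∈ Finset.range n, ξ i ω = -1} / n = hittingWeight η 1 n := by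
  cases n with
  | zero => simp [hittingWeight]
  | succ n =>
    have h := measureReal_sum_range_eq_coeff_pow hη0 hηsum hξ hindep hlaw (n + 1) n
    rw [Nat.cast_succ, sub_add_cancel_left] at h
    rw [h, hittingWeight, if_neg n.succ_ne_zero, pow_one, coeff_succ_X_mul, Nat.cast_one,
      one_div_mul_eq_div]

theorem tendsto_sqrt_mul_mul_hittingWeight (hmean : HasSum (fun i : ℕ => (i : ℝ) * η i) 1)
    {σ : ℝ} (hσ : 0 < σ) (hvar : HasSum (fun i : ℕ => ((i : ℝ) - 1) ^ 2 * η i) (σ ^ 2))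
    (haper : ¬∃ a d : ℤ, 2 ≤ d ∧ ∀ i : ℕ, η i ≠ 0 → d ∣ (i : ℤ) - 1 - a) :
    Tendsto (fun n : ℕ => √n * (n * hittingWeight η 1 n)) atTop (nhds (1 / (σ * √(2 * π)))) := by
  have hident (i : ℕ) : IdentDistrib (ξ i) (ξ 0) P P := by
    have (i : ℕ) : IsProbabilityMeasure (P.map (ξ i)) :=
      Measure.isProbabilityMeasure_map (hξ i).aemeasurable
    refine ⟨(hξ i).aemeasurable, (hξ 0).aemeasurable, Measure.ext_of_singleton fun z => ?_⟩
    rw [← measureReal_eq_measureReal_iff]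
    by_cases hz : z ∈ Set.range fun j : ℕ => (j : ℤ) - 1
    · obtain ⟨j, rfl⟩ := hz
      simp_rw [map_real_natCast_sub_one hη0 (hξ _) (hlaw _)]
    · simp_rw [map_real_eq_zero_of_notMem_range hη0 hηsum (hξ _) (hlaw _) hz]
  have hcentered : ∫ ω, (ξ 0 ω : ℝ) ∂P = 0 :=
    integral_comp_eq_of_hasSum hη0 hηsum (hξ 0) (hlaw 0) (g := fun z => (z : ℝ)) <| by
      simpa [mul_sub, mul_comm] using hmean.sub hηsum
  have hsecond : ∫ ω, (ξ 0 ω : ℝ) ^ 2 ∂P = σ ^ 2 :=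
    integral_comp_eq_of_hasSum hη0 hηsum (hξ 0) (hlaw 0) (g := fun z => (z : ℝ) ^ 2) <| by
      simpa [mul_comm] using hvar
  have hcoset : ¬∃ a d : ℤ, 2 ≤ d ∧ ∀ᵐ ω ∂P, d ∣ ξ 0 ω - a := by
    rintro ⟨a, d, hd, hdvd⟩
    refine haper ⟨a, d, hd, fun i hi => ?_⟩
    have hpos : P {ω | ξ 0 ω = (i : ℤ) - 1} ≠ 0 := by
      rw [hlaw]
      exact (ENNReal.ofReal_pos.2 ((hη0 i).lt_of_ne' hi)).ne'
    obtain ⟨ω, hω, hdω⟩ := (frequently_ae_iff.2 hpos).and_eventually hdvd |>.exists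
    rwa [hω] at hdω
  refine (tendsto_sqrt_mul_measureReal_sum_eq hξ hindep hident hcentered hσ hsecond hcoset
    (-1)).congr fun n => ?_
  rw [← measureReal_sum_range_eq_neg_one_div hη0 hηsum hξ hindep hlaw]
  rcases eq_or_ne n 0 with rfl | hn
  · simp
  · field_simp

end Walk

end OffspringWalk

section OrderingWeight

variable {α : Type*} [DecidableEq α]

theorem prod_factorial_count_mul_countPerms (M : Multiset α) :
    (∏ a ∈ M.toFinset, (M.count a).factorial) * M.countPerms = (Multiset.card M).factorial := by
  have h := Nat.multinomial_spec M.toFinset (Multiset.toFinsupp M)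
  simp only [Multiset.toFinsupp_apply, Multiset.toFinset_sum_count_eq] at h
  rw [← h, Multiset.countPerms, Finsupp.multinomial_eq, Multiset.toFinsupp_support]

theorem count_mul_countPerms_cons (a : α) (μ : Multiset α) :
    (a ::ₘ μ).count a * (a ::ₘ μ).countPerms = (Multiset.card μ + 1) * μ.countPerms := by
  rw [Multiset.countPerms_filter_ne a (a ::ₘ μ), Multiset.countPerms_filter_ne a μ,
    Multiset.filter_cons_of_neg _ (by simp), Multiset.card_cons, Multiset.count_cons_self,
    ← mul_assoc, ← mul_assoc, Nat.add_one_mul_choose_eq, mul_comm (μ.count a + 1)]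

/-- The total weight of the orderings of the multiset `M`, where an ordering is weighted by the
product of the weights `w` of its terms. -/
noncomputable def orderingWeight (w : α → ℝ) (M : Multiset α) : ℝ :=
  M.countPerms * (M.map w).prod

theorem orderingWeight_nonneg {w : α → ℝ} (hw : ∀ a, 0 ≤ w a) (M : Multiset α) :
    0 ≤ orderingWeight w M :=
  mul_nonneg (Nat.cast_nonneg _) <| Multiset.prod_nonneg fun x hx => by
    obtain ⟨a, -, rfl⟩ := Multiset.mem_map.1 hx
    exact hw a

theorem orderingWeight_eq_zero {w : α → ℝ} {a : α} (ha : w a = 0) {M : Multiset α} (hM : a ∈ M) :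
    orderingWeight w M = 0 := by
  rw [orderingWeight, Multiset.prod_eq_zero (Multiset.mem_map.2 ⟨a, hM, ha⟩), mul_zero]

theorem count_mul_orderingWeight (w : α → ℝ) {a : α} {M : Multiset α} (h : a ∈ M) :
    M.count a * orderingWeight w M
      = Multiset.card M * (w a * orderingWeight w (M.erase a)) := by
  obtain ⟨μ, rfl⟩ := Multiset.exists_cons_of_mem h
  have hcons : ((a ::ₘ μ).count a : ℝ) * (a ::ₘ μ).countPerms
      = (Multiset.card μ + 1 : ℕ) * μ.countPerms := mod_cast count_mul_countPerms_cons a μ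
  rw [Multiset.erase_cons_head, orderingWeight, orderingWeight, Multiset.map_cons,
    Multiset.prod_cons, Multiset.card_cons]
  linear_combination w a * (μ.map w).prod * hcons

/-- Marking an element of a multiset amounts to splitting it off; `β` carries along further
data. -/
def markedEquiv (α β : Type*) [DecidableEq α] :
    (Σ y : β × Multiset α, {a // a ∈ y.2.toFinset}) ≃ β × α × Multiset α where
  toFun x := (x.1.1, x.2.1, x.1.2.erase x.2.1)
  invFun y := ⟨(y.1, y.2.1 ::ₘ y.2.2), y.2.1, by simp⟩
  left_inv := by
    rintro ⟨⟨b, M⟩, a, ha⟩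
    obtain ⟨μ, rfl⟩ := Multiset.exists_cons_of_mem (Multiset.mem_toFinset.1 ha)
    exact Sigma.subtype_ext (by simp) rfl
  right_inv := by
    rintro ⟨b, a, μ⟩
    simp

theorem hasSum_sum_toFinset_erase_prod {β : Type*} {G : β × α × Multiset α → ℝ} {s : ℝ}
    (h : HasSum G s) :
    HasSum (fun y : β × Multiset α => ∑ a ∈ y.2.toFinset, G (y.1, a, y.2.erase a)) s := by
  refine (((markedEquiv α β).hasSum_iff.2 h).sigma fun y => hasSum_fintype _).congr_fun fun y => ?_
  exact (Finset.sum_coe_sort y.2.toFinset fun a => G (y.1, a, y.2.erase a)).symm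

theorem hasSum_sum_toFinset_erase {G : α × Multiset α → ℝ} {s : ℝ} (h : HasSum G s) :
    HasSum (fun M : Multiset α => ∑ a ∈ M.toFinset, G (a, M.erase a)) s := by
  have h' : HasSum (fun y : Unit × α × Multiset α => G y.2) s :=
    (Equiv.hasSum_iff (Equiv.punitProd (α × Multiset α))).2 h
  rw [← Equiv.hasSum_iff (Equiv.punitProd.{0} (Multiset α))]
  exact (hasSum_sum_toFinset_erase_prod h').congr_fun fun _ => rfl

theorem hasSum_orderingWeight_of_card_eq {w : α → ℝ} {s : ℝ} (hw : ∀ a, 0 ≤ w a) (hs : HasSum w s)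
    (p : ℕ) :
    HasSum (fun M : Multiset α => if Multiset.card M = p then orderingWeight w M else 0)
      (s ^ p) := by
  induction p with
  | zero =>
    rw [pow_zero]
    refine (hasSum_ite_eq (0 : Multiset α) (1 : ℝ)).congr_fun fun M => ?_
    rcases eq_or_ne M 0 with rfl | hM
    · simp [orderingWeight]
    · simp [hM]
  | succ p ih =>
    have hprod := hs.mul ih (hs.summable.mul_of_nonneg ih.summable hw fun M => by
      dsimp only [Pi.zero_apply]
      split_ifs
      exacts [orderingWeight_nonneg hw M, le_rfl])
    rw [← pow_succ'] at hprod
    refine (hasSum_sum_toFinset_erase hprod).congr_fun fun M => ?_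
    have hcard {a : α} (ha : a ∈ M.toFinset) :
        Multiset.card (M.erase a) = p ↔ Multiset.card M = p + 1 := by
      have := Multiset.card_erase_add_one (Multiset.mem_toFinset.1 ha)
      omega
    split_ifs with hM
    · have hterm (a : α) (ha : a ∈ M.toFinset) :
          w a * (if Multiset.card (M.erase a) = p then orderingWeight w (M.erase a) else 0)
            = M.count a * orderingWeight w M / (p + 1) := by
        rw [if_pos ((hcard ha).2 hM), count_mul_orderingWeight w (Multiset.mem_toFinset.1 ha), hM,
          Nat.cast_succ, mul_div_cancel_left₀ _ p.cast_add_one_ne_zero]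
      rw [Finset.sum_congr rfl hterm, ← Finset.sum_div, ← Finset.sum_mul, ← Nat.cast_sum,
        Multiset.toFinset_sum_count_eq, hM, Nat.cast_succ,
        mul_div_cancel_left₀ _ p.cast_add_one_ne_zero]
    · exact (Finset.sum_eq_zero fun a ha => by rw [if_neg (mt (hcard ha).1 hM), mul_zero]).symm

theorem hasSum_mul_orderingWeight {w : α → ℝ} (hw : ∀ a, 0 ≤ w a) (hs : HasSum w 1) {g : ℕ → ℝ}
    {s : ℝ} (hg0 : ∀ p, 0 ≤ g p) (hg : HasSum g s) :
    HasSum (fun M : Multiset α => g (Multiset.card M) * orderingWeight w M) s := by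
  let F (p : ℕ) (M : Multiset α) : ℝ :=
    g p * if Multiset.card M = p then orderingWeight w M else 0
  have hrow (p : ℕ) : HasSum (F p) (g p) := by
    have h := (hasSum_orderingWeight_of_card_eq hw hs p).mul_left (g p)
    rwa [one_pow, mul_one] at h
  have hF : Summable fun x : ℕ × Multiset α => F x.1 x.2 := by
    rw [summable_prod_of_nonneg fun x => mul_nonneg (hg0 _) ?_]
    · exact ⟨fun p => (hrow p).summable, hg.summable.congr fun p => (hrow p).tsum_eq.symm⟩
    · split_ifs
      exacts [orderingWeight_nonneg hw _, le_rfl]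
  have hcol (M : Multiset α) :
      HasSum (fun p => F p M) (g (Multiset.card M) * orderingWeight w M) := by
    have h := hasSum_single (f := fun p => F p M) (Multiset.card M) fun p hp => by
      simp [F, hp.symm]
    simpa [F] using h
  rw [← (hF.hasSum.prod_fiberwise hrow).unique hg]
  exact ((Equiv.prodComm _ _).hasSum_iff.2 hF.hasSum).prod_fiberwise hcol

end OrderingWeight

section TwoMarks

theorem orderingWeight_mul_sum_map {α : Type*} [DecidableEq α] (w φ : α → ℝ) (M : Multiset α) :
    orderingWeight w M * (M.map φ).sum
      = ∑ a ∈ M.toFinset, Multiset.card M * (w a * φ a * orderingWeight w (M.erase a)) := by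
  rw [Finset.sum_multiset_map_count, Finset.mul_sum]
  refine Finset.sum_congr rfl fun a ha => ?_
  rw [nsmul_eq_mul]
  linear_combination φ a * count_mul_orderingWeight w (Multiset.mem_toFinset.1 ha)

/-- The sum of the products `a * b` over the ordered pairs of distinct positions in `M`; the
element `a` contributes `a * (M.sum - a)`. -/
noncomputable def pairMass (M : Multiset ℕ) : ℝ :=
  (M.map fun a : ℕ => (a : ℝ) * (M.sum - a)).sum

theorem orderingWeight_mul_pairMass (w : ℕ → ℝ) (M : Multiset ℕ) :
    orderingWeight w M * pairMass M
      = ∑ a ∈ M.toFinset, ∑ b ∈ (M.erase a).toFinset,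
          Multiset.card M * Multiset.card (M.erase a) *
            (a * w a * (b * w b) * orderingWeight w ((M.erase a).erase b)) := by
  rw [pairMass, orderingWeight_mul_sum_map]
  refine Finset.sum_congr rfl fun a ha => ?_
  have hrest : (M.sum : ℝ) - a = ((M.erase a).map (Nat.cast : ℕ → ℝ)).sum := by
    rw [← Nat.cast_multiset_sum, ← Multiset.sum_erase (Multiset.mem_toFinset.1 ha), Nat.cast_add,
      add_sub_cancel_left]
  have hsplit := orderingWeight_mul_sum_map w (Nat.cast : ℕ → ℝ) (M.erase a)
  rw [hrest]
  calc _ = Multiset.card M * (a * w a) *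
        (orderingWeight w (M.erase a) * ((M.erase a).map (Nat.cast : ℕ → ℝ)).sum) := by ring
    _ = _ := by
      rw [hsplit, Finset.mul_sum]
      exact Finset.sum_congr rfl fun b _ => by ring

/-- The weight left on the multiset `μ` of the remaining parts once two marked parts have been
removed from a partition with `card μ + 2` parts. -/
noncomputable def residualWeight (η w : ℕ → ℝ) (μ : Multiset ℕ) : ℝ :=
  η (Multiset.card μ + 2) * (Multiset.card μ + 2) * (Multiset.card μ + 1) * orderingWeight w μ

/-- The convolution of `a ↦ a * w a` with itself at `n - μ.sum`, where the pair `(a, b)` is tested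
against the value of `g` at `μ` completed by `a` and `b`. -/
noncomputable def pairConvolution (w : ℕ → ℝ) (g : Multiset ℕ → ℝ) (n : ℕ) (μ : Multiset ℕ) : ℝ :=
  if μ.sum ≤ n then ∑ x ∈ Finset.HasAntidiagonal.antidiagonal (n - μ.sum),
    x.1 * w x.1 * (x.2 * w x.2) * g (x.1 ::ₘ x.2 ::ₘ μ) else 0

variable {η w : ℕ → ℝ} {g : Multiset ℕ → ℝ} {n : ℕ} {s : ℝ}

theorem residualWeight_nonneg (hη : ∀ i, 0 ≤ η i) (hw : ∀ i, 0 ≤ w i) (μ : Multiset ℕ) :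
    0 ≤ residualWeight η w μ := by
  have := hη (Multiset.card μ + 2)
  have := orderingWeight_nonneg hw μ
  unfold residualWeight
  positivity

theorem hasSum_residualWeight {σ : ℝ} (hη0 : ∀ i, 0 ≤ η i) (hηsum : HasSum η 1)
    (hmean : HasSum (fun i : ℕ => (i : ℝ) * η i) 1)
    (hvar : HasSum (fun i : ℕ => ((i : ℝ) - 1) ^ 2 * η i) (σ ^ 2)) (hw0 : ∀ i, 0 ≤ w i)
    (hwsum : HasSum w 1) : HasSum (residualWeight η w) (σ ^ 2) := by
  have hfactorial : HasSum (fun i : ℕ => (i : ℝ) * (i - 1) * η i) (σ ^ 2) := by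
    have h := (hvar.add hmean).sub hηsum
    rw [add_sub_cancel_right] at h
    exact h.congr_fun fun i => by ring
  have hshift : HasSum (fun p : ℕ => η (p + 2) * (p + 2) * (p + 1)) (σ ^ 2) := by
    rw [← hasSum_nat_add_iff' 2] at hfactorial
    simp only [Finset.sum_range_succ, Finset.sum_range_zero, Nat.cast_zero, zero_mul, Nat.cast_one,
      sub_self, mul_zero, add_zero, sub_zero] at hfactorial
    exact hfactorial.congr_fun fun p => by push_cast; ring
  exact hasSum_mul_orderingWeight hw0 hwsum (fun p => by have := hη0 (p + 2); positivity) hshift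

theorem hasSum_mul_pairMass
    (h : HasSum (fun x : ℕ × ℕ × Multiset ℕ => residualWeight η w x.2.2 *
      (x.1 * w x.1 * (x.2.1 * w x.2.1) * g (x.1 ::ₘ x.2.1 ::ₘ x.2.2))) s) :
    HasSum (fun M : Multiset ℕ =>
      η (Multiset.card M) * orderingWeight w M * pairMass M * g M) s := by
  refine (hasSum_sum_toFinset_erase (hasSum_sum_toFinset_erase_prod h)).congr_fun fun M => ?_
  rw [mul_assoc (η _), orderingWeight_mul_pairMass, Finset.mul_sum, Finset.sum_mul]
  refine Finset.sum_congr rfl fun a ha => ?_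
  rw [Finset.mul_sum, Finset.sum_mul]
  refine Finset.sum_congr rfl fun b hb => ?_
  rw [Multiset.mem_toFinset] at ha hb
  have hcard := Multiset.card_erase_add_one ha
  have hcard' := Multiset.card_erase_add_one hb
  dsimp only
  rw [Multiset.cons_erase hb, Multiset.cons_erase ha, residualWeight, ← hcard, ← hcard']
  push_cast
  ring

theorem sum_partition_eq_of_hasSum {H : Multiset ℕ → ℝ} (h0 : ∀ M, 0 ∈ M → H M = 0)
    (h : HasSum (fun M : Multiset ℕ => if M.sum = n then H M else 0) s) :
    ∑ lam : Nat.Partition n, H lam.parts = s := by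
  have hinj : Function.Injective fun lam : Nat.Partition n => lam.parts :=
    fun _ _ => Nat.Partition.ext
  rw [← hinj.hasSum_iff] at h
  · rw [← (hasSum_fintype _).unique h]
    exact Finset.sum_congr rfl fun lam _ => (if_pos lam.parts_sum).symm
  · intro M hM
    rw [ite_eq_right_iff]
    refine fun hsum => h0 M ?_
    by_contra hzero
    exact hM ⟨⟨M, fun hi => Nat.pos_of_ne_zero fun h => hzero (h ▸ hi), hsum⟩, rfl⟩

theorem summable_residualWeight_mul {C : ℝ} (hη : ∀ i, 0 ≤ η i) (hw : ∀ i, 0 ≤ w i)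
    (hg : ∀ M : Multiset ℕ, M.sum = n → |g M| ≤ C) (hW : Summable (residualWeight η w)) :
    Summable fun x : ℕ × ℕ × Multiset ℕ => residualWeight η w x.2.2 *
      (x.1 * w x.1 * (x.2.1 * w x.2.1) *
        if (x.1 ::ₘ x.2.1 ::ₘ x.2.2).sum = n then g (x.1 ::ₘ x.2.1 ::ₘ x.2.2) else 0) := by
  have hC : 0 ≤ C := (abs_nonneg _).trans (hg {n} (Multiset.sum_singleton n))
  have hW0 := residualWeight_nonneg hη hw
  let u (a : ℕ) : ℝ := if a ≤ n then a * w a else 0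
  have hu_of_le {a : ℕ} (ha : a ≤ n) : u a = a * w a := if_pos ha
  have hu0 (a : ℕ) : 0 ≤ u a := by
    have := hw a
    dsimp only [u]
    split_ifs <;> positivity
  have hu : Summable u := summable_of_ne_finset_zero (s := Finset.range (n + 1)) fun a ha =>
    if_neg fun h => ha (Finset.mem_range_succ_iff.2 h)
  have hbound : Summable fun x : ℕ × ℕ × Multiset ℕ =>
      u x.1 * (u x.2.1 * (residualWeight η w x.2.2 * C)) :=
    hu.mul_of_nonneg (hu.mul_of_nonneg (hW.mul_right C) hu0 fun μ => mul_nonneg (hW0 μ) hC) hu0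
      fun x => mul_nonneg (hu0 _) (mul_nonneg (hW0 _) hC)
  refine hbound.of_norm_bounded fun ⟨a, b, μ⟩ => ?_
  dsimp only
  have hnonneg := mul_nonneg (hu0 a) (mul_nonneg (hu0 b) (hW0 μ))
  split_ifs with h
  · have hsum := h
    rw [Multiset.sum_cons, Multiset.sum_cons] at hsum
    rw [← hu_of_le (by omega : a ≤ n), ← hu_of_le (by omega : b ≤ n), Real.norm_eq_abs, abs_mul,
      abs_mul, abs_mul, abs_of_nonneg (hW0 μ), abs_of_nonneg (hu0 a), abs_of_nonneg (hu0 b)]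
    linarith [mul_le_mul_of_nonneg_left (hg _ h) hnonneg]
  · rw [mul_zero, mul_zero, norm_zero, ← mul_assoc, ← mul_assoc, mul_assoc (u a)]
    exact mul_nonneg hnonneg hC

theorem hasSum_residualWeight_mul_pairConvolution
    (h : HasSum (fun x : ℕ × ℕ × Multiset ℕ => residualWeight η w x.2.2 *
      (x.1 * w x.1 * (x.2.1 * w x.2.1) *
        if (x.1 ::ₘ x.2.1 ::ₘ x.2.2).sum = n then g (x.1 ::ₘ x.2.1 ::ₘ x.2.2) else 0)) s) :
    HasSum (fun μ => residualWeight η w μ * pairConvolution w g n μ) s := by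
  let e : Multiset ℕ × ℕ × ℕ ≃ ℕ × ℕ × Multiset ℕ :=
    (Equiv.prodComm _ _).trans (Equiv.prodAssoc _ _ _)
  refine (e.hasSum_iff.2 h).prod_fiberwise fun μ => HasSum.mul_left _ ?_
  change HasSum (fun x : ℕ × ℕ => x.1 * w x.1 * (x.2 * w x.2) *
    if (x.1 ::ₘ x.2 ::ₘ μ).sum = n then g (x.1 ::ₘ x.2 ::ₘ μ) else 0) _
  have hsum (x : ℕ × ℕ) : (x.1 ::ₘ x.2 ::ₘ μ).sum = n ↔ x.1 + x.2 + μ.sum = n := by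
    rw [Multiset.sum_cons, Multiset.sum_cons, add_assoc]
  rw [pairConvolution]
  split_ifs with hn
  · have hmem (x : ℕ × ℕ) : x ∈ Finset.HasAntidiagonal.antidiagonal (n - μ.sum) ↔
        (x.1 ::ₘ x.2 ::ₘ μ).sum = n := by
      rw [Finset.HasAntidiagonal.mem_antidiagonal, hsum]
      omega
    convert hasSum_sum_of_ne_finset_zero (L := SummationFilter.unconditional _)
      (s := Finset.HasAntidiagonal.antidiagonal (n - μ.sum)) fun x hx => ?_ using 1
    · exact Finset.sum_congr rfl fun x hx => by rw [if_pos ((hmem x).1 hx)]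
    · rw [if_neg (mt (hmem x).2 hx), mul_zero]
  · refine hasSum_zero.congr_fun fun x => ?_
    rw [if_neg (by rw [hsum]; omega), mul_zero]

theorem sum_partition_mul_pairMass {C : ℝ} (hη : ∀ i, 0 ≤ η i) (hw : ∀ i, 0 ≤ w i) (hw0 : w 0 = 0)
    (hW : Summable (residualWeight η w)) (hg : ∀ M : Multiset ℕ, M.sum = n → |g M| ≤ C) :
    ∑ lam : Nat.Partition n, η (Multiset.card lam.parts) * orderingWeight w lam.parts *
        pairMass lam.parts * g lam.parts
      = ∑' μ, residualWeight η w μ * pairConvolution w g n μ := by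
  have h := (summable_residualWeight_mul hη hw hg hW).hasSum
  rw [(hasSum_residualWeight_mul_pairConvolution h).tsum_eq]
  refine sum_partition_eq_of_hasSum
    (H := fun M => η (Multiset.card M) * orderingWeight w M * pairMass M * g M) (fun M hM => ?_)
    ((hasSum_mul_pairMass (g := fun M => if M.sum = n then g M else 0) h).congr_fun fun M => ?_)
  · rw [orderingWeight_eq_zero hw0 hM, mul_zero, zero_mul, zero_mul]
  · rw [mul_ite, mul_zero]

end TwoMarks

section Convolution

theorem floor_eqOn_Ioo (φ : ℕ → ℝ) (a : ℕ) :
    EqOn (fun y : ℝ => φ ⌊y⌋₊) (fun _ => φ a) (Ioo a ((a + 1 : ℕ) : ℝ)) := fun y hy => by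
  rw [Nat.cast_add_one] at hy
  exact congrArg φ (Nat.floor_eq_on_Ico a y (Ioo_subset_Ico_self hy))

theorem intervalIntegrable_floor (φ : ℕ → ℝ) (a : ℕ) :
    IntervalIntegrable (fun y : ℝ => φ ⌊y⌋₊) volume a ((a + 1 : ℕ) : ℝ) := by
  have hle : (a : ℝ) ≤ (a + 1 : ℕ) := Nat.cast_le.2 a.le_succ
  refine (intervalIntegrable_const (c := φ a)).congr_uIoo ?_
  rw [uIoo_of_le hle]
  exact (floor_eqOn_Ioo φ a).symm

theorem integral_floor (φ : ℕ → ℝ) (m : ℕ) :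
    ∫ y in (0 : ℝ)..m, φ ⌊y⌋₊ = ∑ a ∈ Finset.range m, φ a := by
  rw [← Nat.cast_zero, ← intervalIntegral.sum_integral_adjacent_intervals
    (a := fun k : ℕ => (k : ℝ)) fun k _ => intervalIntegrable_floor φ k]
  refine Finset.sum_congr rfl fun a _ => ?_
  have hle : (a : ℝ) ≤ (a + 1 : ℕ) := Nat.cast_le.2 a.le_succ
  rw [intervalIntegral.integral_congr_Ioo_of_le hle (floor_eqOn_Ioo φ a),
    intervalIntegral.integral_const, Nat.cast_add_one, add_sub_cancel_left, one_smul]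

theorem integral_mul_floor_mul (φ : ℕ → ℝ) (m : ℕ) :
    ∫ x in (0 : ℝ)..1, m * φ ⌊m * x⌋₊ = ∑ a ∈ Finset.range m, φ a := by
  rw [intervalIntegral.integral_const_mul,
    intervalIntegral.mul_integral_comp_mul_left (f := fun y : ℝ => φ ⌊y⌋₊), mul_zero, mul_one,
    integral_floor]

theorem intervalIntegrable_inv_sqrt_add_inv_sqrt :
    IntervalIntegrable (fun x : ℝ => (√x)⁻¹ + (√(1 - x))⁻¹) volume 0 1 := by
  have h : IntervalIntegrable (fun x : ℝ => (√x)⁻¹) volume 0 1 := by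
    refine (intervalIntegral.intervalIntegrable_rpow' (r := -(1 / 2)) (by norm_num)).congr ?_
    intro x hx
    rw [uIoc_of_le zero_le_one] at hx
    dsimp only
    rw [rpow_neg hx.1.le, sqrt_eq_rpow]
  have hreflect := (h.comp_sub_left 1).symm
  rw [sub_self, sub_zero] at hreflect
  exact h.add hreflect

theorem inv_sqrt_mul_le {x : ℝ} (hx : x ∈ Ioo 0 1) :
    (√(x * (1 - x)))⁻¹ ≤ (√x)⁻¹ + (√(1 - x))⁻¹ := by
  have h0 : 0 < √x := sqrt_pos.2 hx.1
  have h1 : 0 < √(1 - x) := sqrt_pos.2 (sub_pos.2 hx.2)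
  rw [sqrt_mul hx.1.le, inv_add_inv h0.ne' h1.ne', inv_eq_one_div]
  gcongr
  nlinarith [sq_sqrt hx.1.le, sq_sqrt (sub_pos.2 hx.2).le, mul_pos h0 h1]

variable {v : ℕ → ℝ} {c : ℝ}

theorem mul_abs_floor_mul_le {K : ℝ} (hK : ∀ n : ℕ, |√n * v n| ≤ K) (hv0 : v 0 = 0) (m : ℕ) {x : ℝ}
    (hx : x ∈ Ioo 0 1) :
    m * |v ⌊m * x⌋₊ * v (m - ⌊m * x⌋₊)| ≤ 2 * K ^ 2 * ((√x)⁻¹ + (√(1 - x))⁻¹) := by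
  have hpos : 0 < x * (1 - x) := mul_pos hx.1 (sub_pos.2 hx.2)
  refine le_trans ?_ (mul_le_mul_of_nonneg_left (inv_sqrt_mul_le hx) (by positivity))
  have hfloor : (⌊m * x⌋₊ : ℝ) ≤ m * x := Nat.floor_le (mul_nonneg m.cast_nonneg hx.1.le)
  have hlt := Nat.lt_floor_add_one (m * x)
  have hK0 : 0 ≤ K := (abs_nonneg _).trans (hK 0)
  generalize ⌊m * x⌋₊ = a at hfloor hlt ⊢
  rcases a.eq_zero_or_pos with rfl | ha
  · rw [hv0, zero_mul, abs_zero, mul_zero]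
    positivity
  have ha1 : (1 : ℝ) ≤ a := Nat.one_le_cast.2 ha
  have ham : a ≤ m := Nat.cast_le.1 (hfloor.trans (mul_le_of_le_one_right m.cast_nonneg hx.2.le))
  set b := m - a
  have hbR : (b : ℝ) = m - a := Nat.cast_sub ham
  have hvv : √(a * b) * |v a * v b| ≤ K ^ 2 := by
    rw [sqrt_mul (by positivity), ← abs_of_nonneg (sqrt_nonneg (a : ℝ)),
      ← abs_of_nonneg (sqrt_nonneg (b : ℝ)), ← abs_mul, ← abs_mul, mul_mul_mul_comm, abs_mul, sq]
    exact mul_le_mul (hK a) (hK b) (abs_nonneg _) hK0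
  have hroots : m * √(x * (1 - x)) ≤ 2 * √(a * b) := by
    refine abs_le_of_sq_le_sq' ?_ (by positivity) |>.2
    rw [mul_pow, mul_pow, sq_sqrt hpos.le, sq_sqrt (by positivity)]
    nlinarith [mul_le_mul (by linarith : m * x ≤ 2 * a) (by linarith : m * (1 - x) ≤ b)
      (mul_nonneg m.cast_nonneg (sub_pos.2 hx.2).le) (by positivity)]
  rw [← div_eq_mul_inv, le_div_iff₀ (sqrt_pos.2 hpos)]
  nlinarith [mul_le_mul_of_nonneg_right hroots (abs_nonneg (v a * v b))]

theorem tendsto_atTop_of_tendsto_div {ι : Type*} {l : Filter ι} {a m : ι → ℕ} {x : ℝ} (hx : 0 < x)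
    (hm : Tendsto m l atTop) (ha : Tendsto (fun k => (a k : ℝ) / m k) l (nhds x)) :
    Tendsto a l atTop := by
  have hm' : Tendsto (fun k => (m k : ℝ)) l atTop := tendsto_natCast_atTop_atTop.comp hm
  rw [← tendsto_natCast_atTop_iff (R := ℝ)]
  refine (ha.pos_mul_atTop hx hm').congr' ?_
  filter_upwards [hm'.eventually_gt_atTop 0] with k hk
  rw [div_mul_cancel₀ _ hk.ne']

theorem tendsto_sub_div {a m : ℕ → ℕ} {x : ℝ} (hm : Tendsto m atTop atTop) (ham : ∀ k, a k ≤ m k)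
    (ha : Tendsto (fun k => (a k : ℝ) / m k) atTop (nhds x)) :
    Tendsto (fun k => ((m k - a k : ℕ) : ℝ) / m k) atTop (nhds (1 - x)) := by
  refine (ha.const_sub 1).congr' ?_
  filter_upwards [hm.eventually_gt_atTop 0] with k hk
  have hk' : (m k : ℝ) ≠ 0 := Nat.cast_ne_zero.2 hk.ne'
  rw [Nat.cast_sub (ham k), sub_div, div_self hk']

theorem tendsto_mul_mul_sub (hc : Tendsto (fun n : ℕ => √n * v n) atTop (nhds c)) {a m : ℕ → ℕ}
    (hm : Tendsto m atTop atTop) {x : ℝ} (hx : x ∈ Ioo 0 1) (ham : ∀ k, a k ≤ m k)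
    (ha : Tendsto (fun k => (a k : ℝ) / m k) atTop (nhds x)) :
    Tendsto (fun k => m k * (v (a k) * v (m k - a k))) atTop
      (nhds (c ^ 2 * (√(x * (1 - x)))⁻¹)) := by
  have hb := tendsto_sub_div hm ham ha
  have hx1 : 0 < 1 - x := sub_pos.2 hx.2
  have hatop := tendsto_atTop_of_tendsto_div hx.1 hm ha
  have hbtop := tendsto_atTop_of_tendsto_div hx1 hm hb
  have hroot := ((ha.mul hb).sqrt).inv₀ (sqrt_pos.2 (mul_pos hx.1 hx1)).ne'
  rw [sq]
  refine (((hc.comp hatop).mul (hc.comp hbtop)).mul hroot).congr' ?_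
  filter_upwards [hm.eventually_gt_atTop 0, hatop.eventually_gt_atTop 0,
    hbtop.eventually_gt_atTop 0] with k hk hak hbk
  have hk' : (0 : ℝ) < m k := Nat.cast_pos.2 hk
  have : 0 < √(a k : ℝ) := sqrt_pos.2 (Nat.cast_pos.2 hak)
  have : 0 < √((m k - a k : ℕ) : ℝ) := sqrt_pos.2 (Nat.cast_pos.2 hbk)
  rw [div_mul_div_comm, sqrt_div (by positivity), sqrt_mul_self hk'.le,
    sqrt_mul (Nat.cast_nonneg _)]
  dsimp only [Function.comp_apply]
  field_simp

theorem tendsto_floor_mul_div {m : ℕ → ℕ} (hm : Tendsto m atTop atTop) {x : ℝ} (hx : 0 ≤ x) :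
    Tendsto (fun k => (⌊m k * x⌋₊ : ℝ) / m k) atTop (nhds x) := by
  refine ((tendsto_nat_floor_mul_div_atTop hx).comp
    (tendsto_natCast_atTop_atTop.comp hm)).congr fun k => ?_
  rw [Function.comp_apply, Function.comp_apply, mul_comm]

theorem floor_mul_le (m : ℕ) {x : ℝ} (hx : x ≤ 1) : ⌊m * x⌋₊ ≤ m :=
  Nat.floor_le_of_le (mul_le_of_le_one_right m.cast_nonneg hx)

theorem sum_antidiagonal_eq_integral {φ : ℕ × ℕ → ℝ} {m : ℕ} (hφ : φ (m, 0) = 0) :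
    ∑ y ∈ Finset.HasAntidiagonal.antidiagonal m, φ y
      = ∫ x in (0 : ℝ)..1, m * φ (⌊m * x⌋₊, m - ⌊m * x⌋₊) := by
  rw [Finset.Nat.sum_antidiagonal_eq_sum_range_succ_mk, Finset.sum_range_succ, Nat.sub_self, hφ,
    add_zero]
  exact (integral_mul_floor_mul (fun a => φ (a, m - a)) m).symm

theorem exists_abs_sqrt_mul_le (hc : Tendsto (fun n : ℕ => √n * v n) atTop (nhds c)) :
    ∃ K, ∀ n : ℕ, |√n * v n| ≤ K := by
  obtain ⟨K, hK⟩ := hc.abs.bddAbove_range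
  exact ⟨K, fun n => hK ⟨n, rfl⟩⟩

theorem tendsto_sum_antidiagonal_mul (hv0 : v 0 = 0)
    (hc : Tendsto (fun n : ℕ => √n * v n) atTop (nhds c)) {m : ℕ → ℕ} (hm : Tendsto m atTop atTop)
    {G : ℕ → ℕ × ℕ → ℝ} {C : ℝ}
    (hG : ∀ᶠ k in atTop, ∀ y ∈ Finset.HasAntidiagonal.antidiagonal (m k), |G k y| ≤ C)
    {g : ℝ → ℝ} (hg : ∀ᵐ x : ℝ, x ∈ Ioo 0 1 → ∀ a : ℕ → ℕ, (∀ k, a k ≤ m k) →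
      Tendsto (fun k => (a k : ℝ) / m k) atTop (nhds x) →
      Tendsto (fun k => G k (a k, m k - a k)) atTop (nhds (g x))) :
    Tendsto (fun k => ∑ y ∈ Finset.HasAntidiagonal.antidiagonal (m k), v y.1 * v y.2 * G k y) atTop
      (nhds (c ^ 2 * ∫ x in (0 : ℝ)..1, (√(x * (1 - x)))⁻¹ * g x)) := by
  obtain ⟨K, hK⟩ := exists_abs_sqrt_mul_le hc
  have hIoo : ∀ᵐ x : ℝ, x ∈ uIoc 0 1 → x ∈ Ioo 0 1 := by
    filter_upwards [Measure.ae_ne volume 1] with x hx1 hx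
    rw [uIoc_of_le zero_le_one] at hx
    exact ⟨hx.1, hx.2.lt_of_ne hx1⟩
  rw [← intervalIntegral.integral_const_mul]
  have hsum (k : ℕ) := sum_antidiagonal_eq_integral (φ := fun y => v y.1 * v y.2 * G k y)
    (m := m k) (by rw [hv0, mul_zero, zero_mul])
  refine Tendsto.congr (fun k => (hsum k).symm) ?_
  refine intervalIntegral.tendsto_integral_filter_of_dominated_convergence
    (fun x => 2 * K ^ 2 * ((√x)⁻¹ + (√(1 - x))⁻¹) * C) (Eventually.of_forall fun k => ?_) ?_
    ((intervalIntegrable_inv_sqrt_add_inv_sqrt.const_mul _).mul_const _) ?_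
  · have hφ : Measurable fun a => v a * v (m k - a) * G k (a, m k - a) := measurable_from_nat
    exact ((hφ.comp (Nat.measurable_floor.comp (measurable_const_mul _))).const_mul
      (m k : ℝ)).aestronglyMeasurable
  · filter_upwards [hG] with k hGk
    filter_upwards [hIoo] with x hx hx'
    have hx := hx hx'
    rw [Real.norm_eq_abs, ← mul_assoc, abs_mul, abs_mul, Nat.abs_cast]
    exact mul_le_mul (mul_abs_floor_mul_le hK hv0 (m k) hx)
      (hGk _ (by
        rw [Finset.HasAntidiagonal.mem_antidiagonal]
        exact Nat.add_sub_cancel' (floor_mul_le _ hx.2.le)))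
      (abs_nonneg _) (by positivity)
  · filter_upwards [hIoo, hg] with x hx hgx hx'
    have hx := hx hx'
    have hle (k : ℕ) := floor_mul_le (m k) hx.2.le
    have hdiv := tendsto_floor_mul_div hm hx.1.le
    rw [← mul_assoc]
    refine ((tendsto_mul_mul_sub hc hm hx hle hdiv).mul (hgx hx _ hle hdiv)).congr fun k => ?_
    ring

theorem exists_sum_antidiagonal_abs_le (hv0 : v 0 = 0)
    (hc : Tendsto (fun n : ℕ => √n * v n) atTop (nhds c)) :
    ∃ K, ∀ m : ℕ, ∑ y ∈ Finset.HasAntidiagonal.antidiagonal m, |v y.1 * v y.2| ≤ K := by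
  have habs : Tendsto (fun n : ℕ => √n * |v n|) atTop (nhds |c|) := by
    refine hc.abs.congr fun n => ?_
    rw [abs_mul, abs_of_nonneg (sqrt_nonneg _)]
  obtain ⟨K, hK⟩ := (tendsto_sum_antidiagonal_mul (v := fun n => |v n|) (by rw [hv0, abs_zero]) habs
    tendsto_id (G := fun _ _ => 1) (C := 1) (g := fun _ => 1)
    (Eventually.of_forall fun _ _ _ => abs_one.le)
    (Eventually.of_forall fun _ _ _ _ _ => tendsto_const_nhds)).bddAbove_range
  refine ⟨K, fun m => (hK ⟨m, rfl⟩).trans_eq' ?_⟩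
  simp only [id, mul_one, abs_mul]

end Convolution

section ScaledParts

theorem hasSum_list_getD {G : Type*} [AddCommMonoid G] [TopologicalSpace G] [ContinuousAdd G]
    (l : List G) : HasSum (fun i => l.getD i 0) l.sum := by
  induction l with
  | nil => exact hasSum_zero
  | cons a l ih => exact HasSum.zero_add (f := fun i => (a :: l).getD i 0) ih

theorem antitone_list_getD {α : Type*} [Preorder α] {d : α} {l : List α}
    (hl : l.Pairwise (· ≥ ·)) (hd : ∀ x ∈ l, d ≤ x) : Antitone fun i => l.getD i d := by
  intro i j hij
  rcases lt_or_ge j l.length with hj | hj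
  · dsimp only
    rw [List.getD_eq_getElem _ _ hj, List.getD_eq_getElem _ _ (hij.trans_lt hj)]
    rcases hij.eq_or_lt with rfl | hlt
    · exact le_rfl
    · exact List.pairwise_iff_getElem.1 hl i j (hij.trans_lt hj) hj hlt
  · dsimp only
    rw [List.getD_eq_default _ _ hj]
    rcases lt_or_ge i l.length with hi | hi
    · exact (List.getD_eq_getElem _ _ hi).symm ▸ hd _ (List.getElem_mem hi)
    · rw [List.getD_eq_default _ _ hi]

theorem sort_le_reverse {α : Type*} [LinearOrder α] (M : Multiset α) :
    (M.sort (· ≤ ·)).reverse = M.sort (· ≥ ·) := by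
  refine List.Perm.eq_of_pairwise (le := (· ≥ ·)) (fun a b _ _ => ge_antisymm)
    (List.pairwise_reverse.2 (M.pairwise_sort (· ≤ ·))) (M.pairwise_sort (· ≥ ·)) ?_
  rw [← Multiset.coe_eq_coe, Multiset.coe_reverse, Multiset.sort_eq, Multiset.sort_eq]

/-- The elements of `M` in decreasing order, divided by `n` and padded with zeros. It extends
`partVec` to multisets that are not known to be partitions of `n`. -/
noncomputable def scaledParts (n : ℕ) (M : Multiset ℕ) (i : ℕ) : ℝ :=
  ((M.sort (· ≥ ·)).getD i 0 : ℕ) / n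

theorem partVec_eq_scaledParts {n : ℕ} (lam : Nat.Partition n) :
    partVec n lam = scaledParts n lam.parts := by
  funext i
  rw [partVec, scaledParts, sort_le_reverse]

theorem antitone_getD_sort (M : Multiset ℕ) : Antitone fun i => (M.sort (· ≥ ·)).getD i 0 :=
  antitone_list_getD (M.pairwise_sort (· ≥ ·)) fun x _ => x.zero_le

theorem scaledParts_mem_Sdown {M : Multiset ℕ} (hM : M.sum ≠ 0) :
    scaledParts M.sum M ∈ Sdown := by
  have hsum : HasSum (fun i => (M.sort (· ≥ ·)).getD i 0) M.sum := by
    have h := hasSum_list_getD (M.sort (· ≥ ·))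
    rwa [← Multiset.sum_coe, Multiset.sort_eq] at h
  refine ⟨fun i => by unfold scaledParts; positivity, fun i j hij => ?_, ?_⟩
  · have := antitone_getD_sort M hij
    unfold scaledParts
    gcongr
  · have h := (hsum.map (Nat.castAddMonoidHom ℝ) continuous_of_discreteTopology).div_const
      (M.sum : ℝ)
    rwa [Nat.coe_castAddMonoidHom, div_self (Nat.cast_ne_zero.2 hM)] at h

theorem pairSeq_mem_Sdown {x : ℝ} (hx : x ∈ Icc (1 / 2) 1) : pairSeq x ∈ Sdown := by
  obtain ⟨h0, h1⟩ := hx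
  refine ⟨fun i => ?_, fun i j hij => ?_, ?_⟩
  · unfold pairSeq
    split_ifs <;> linarith
  · unfold pairSeq
    split_ifs <;> first | linarith | omega
  · have h := hasSum_list_getD [x, 1 - x]
    rw [List.sum_pair, add_sub_cancel] at h
    refine h.congr_fun fun i => ?_
    match i with
    | 0 | 1 | i + 2 => rfl

theorem coe_toSdown {s : ℕ → ℝ} (hs : s ∈ Sdown) : (toSdown s : ℕ → ℝ) = s := by
  rw [toSdown, dif_pos hs]

theorem tendsto_toSdown {s : ℕ → ℕ → ℝ} {t : ℕ → ℝ} (hs : ∀ᶠ n in atTop, s n ∈ Sdown)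
    (ht : t ∈ Sdown) (h : Tendsto s atTop (nhds t)) :
    Tendsto (fun n => toSdown (s n)) atTop (nhds (toSdown t)) := by
  rw [tendsto_subtype_rng, coe_toSdown ht]
  exact h.congr' (hs.mono fun n hn => (coe_toSdown hn).symm)

theorem scaledParts_cons_cons {a b : ℕ} {μ : Multiset ℕ} (n : ℕ) (hab : b ≤ a)
    (hμ : ∀ c ∈ μ, c ≤ b) (i : ℕ) : scaledParts n (a ::ₘ b ::ₘ μ) i =
      ((a :: b :: μ.sort (· ≥ ·)).getD i 0 : ℕ) / n := by
  have hcons : ∀ c ∈ b ::ₘ μ, c ≤ a :=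
    Multiset.forall_mem_cons.2 ⟨hab, fun c hc => (hμ c hc).trans hab⟩
  rw [scaledParts, Multiset.sort_cons (r := (· ≥ ·)) a _ hcons,
    Multiset.sort_cons (r := (· ≥ ·)) b _ hμ]

variable {a b : ℕ → ℕ} {μ : Multiset ℕ} {x : ℝ}

theorem tendsto_scaledParts_cons_cons (hx : x ∈ Ioo (1 / 2) 1)
    (ha : Tendsto (fun n => (a n : ℝ) / n) atTop (nhds x))
    (hb : Tendsto (fun n => (b n : ℝ) / n) atTop (nhds (1 - x))) :
    Tendsto (fun n => scaledParts n (a n ::ₘ b n ::ₘ μ)) atTop (nhds (pairSeq x)) := by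
  have hab : ∀ᶠ n in atTop, b n ≤ a n := by
    filter_upwards [hb.eventually_lt ha (by linarith [hx.1]), eventually_gt_atTop 0] with n hn h0
    exact (Nat.cast_lt.1 ((div_lt_div_iff_of_pos_right (Nat.cast_pos.2 h0)).1 hn)).le
  have hμ : ∀ᶠ n in atTop, ∀ c ∈ μ, c ≤ b n := by
    have hbtop := tendsto_atTop_of_tendsto_div (sub_pos.2 hx.2) tendsto_id hb
    filter_upwards [hbtop.eventually_ge_atTop μ.sum] with n hn c hc
    exact (Multiset.le_sum_of_mem hc).trans hn
  rw [tendsto_pi_nhds]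
  intro i
  have hlim : Tendsto (fun n => ((a n :: b n :: μ.sort (· ≥ ·)).getD i 0 : ℕ) / (n : ℝ)) atTop
      (nhds (pairSeq x i)) := by
    match i with
    | 0 => exact ha
    | 1 => exact hb
    | i + 2 =>
      exact tendsto_const_div_atTop_nhds_zero_nat (((μ.sort (· ≥ ·)).getD i 0 : ℕ) : ℝ)
  refine hlim.congr' ?_
  filter_upwards [hab, hμ] with n hab hμ
  exact (scaledParts_cons_cons n hab hμ i).symm

theorem tendsto_pairMass_cons_cons_div (ha : Tendsto (fun n => (a n : ℝ) / n) atTop (nhds x))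
    (hb : Tendsto (fun n => (b n : ℝ) / n) atTop (nhds (1 - x)))
    (hsum : ∀ᶠ n in atTop, (a n ::ₘ b n ::ₘ μ).sum = n) :
    Tendsto (fun n : ℕ => pairMass (a n ::ₘ b n ::ₘ μ) / (n : ℝ) ^ 2) atTop
      (nhds (2 * (x * (1 - x)))) := by
  have hμ (c : ℕ) := tendsto_const_div_atTop_nhds_zero_nat (c : ℝ)
  have hrest := tendsto_multiset_sum (f := fun c n : ℕ => (c : ℝ) / n * (1 - c / n)) μ
    fun c _ => (hμ c).mul ((hμ c).const_sub 1)
  have hlim := (ha.mul (ha.const_sub 1)).add ((hb.mul (hb.const_sub 1)).add hrest)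
  rw [zero_mul, Multiset.map_const', Multiset.sum_replicate, smul_zero, add_zero, sub_sub_cancel,
    mul_comm (1 - x), ← two_mul] at hlim
  refine hlim.congr' ?_
  filter_upwards [hsum, eventually_gt_atTop 0] with n hn h0
  have hn0 : (n : ℝ) ≠ 0 := Nat.cast_ne_zero.2 h0.ne'
  rw [pairMass, hn, div_eq_mul_inv _ ((n : ℝ) ^ 2), ← Multiset.sum_map_mul_right, Multiset.map_cons,
    Multiset.map_cons, Multiset.sum_cons, Multiset.sum_cons]
  have hterm (c : ℕ) : (c : ℝ) / n * (1 - c / n) = c * (n - c) * ((n : ℝ) ^ 2)⁻¹ := by field_simp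
  simp only [hterm]

theorem scaledParts_zero_le_one {M : Multiset ℕ} (hM : M.sum ≠ 0) : scaledParts M.sum M 0 ≤ 1 :=
  le_hasSum (scaledParts_mem_Sdown hM).2.2 0 fun i _ => (scaledParts_mem_Sdown hM).1 i

theorem sq_mul_one_sub_scaledParts_le_pairMass {M : Multiset ℕ} (hM : M.sum ≠ 0) :
    (M.sum : ℝ) ^ 2 * (1 - scaledParts M.sum M 0) ≤ pairMass M := by
  have hmax (c : ℕ) (hc : c ∈ M) : c ≤ (M.sort (· ≥ ·)).getD 0 0 := by
    obtain ⟨i, hi, rfl⟩ := List.getElem_of_mem ((Multiset.mem_sort (· ≥ ·)).2 hc)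
    exact (List.getD_eq_getElem _ 0 hi).symm.le.trans (antitone_getD_sort M i.zero_le)
  have hn0 : (M.sum : ℝ) ≠ 0 := Nat.cast_ne_zero.2 hM
  calc (M.sum : ℝ) ^ 2 * (1 - scaledParts M.sum M 0)
      = M.sum * (M.sum - ((M.sort (· ≥ ·)).getD 0 0 : ℕ)) := by rw [scaledParts]; field_simp
    _ = (M.map fun c : ℕ => (c : ℝ) * (M.sum - ((M.sort (· ≥ ·)).getD 0 0 : ℕ))).sum := by
      rw [Multiset.sum_map_mul_right, Nat.cast_multiset_sum]
    _ ≤ pairMass M := Multiset.sum_map_le_sum_map _ _ fun c hc => by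
      have := hmax c hc
      gcongr

end ScaledParts

section SizeBiasedTest

/-- The test function `n² (1 - λ₁ / n) f(λ / n)` divided by `pairMass`: the value at `M` that has to
be averaged under the law size-biased by `pairMass`. -/
noncomputable def sizeBiasedTest (f : Sdown → ℝ) (n : ℕ) (M : Multiset ℕ) : ℝ :=
  (n : ℝ) ^ 2 * ((1 - scaledParts n M 0) * f (toSdown (scaledParts n M))) / pairMass M

/-- The limit of `sizeBiasedTest f n` along partitions of `n` with two macroscopic parts of sizes
`n * x` and `n * (1 - x)`. -/
noncomputable def limitProfile (f : Sdown → ℝ) (x : ℝ) : ℝ :=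
  (1 - max x (1 - x)) * f (toSdown (pairSeq (max x (1 - x)))) / (2 * (x * (1 - x)))

variable {f : Sdown → ℝ}

theorem abs_sizeBiasedTest_le {C : ℝ} (hf : ∀ s, |f s| ≤ C) (M : Multiset ℕ) :
    |sizeBiasedTest f M.sum M| ≤ C := by
  have hC : 0 ≤ C := (abs_nonneg _).trans (hf ⟨oneSeq, oneSeq_mem_Sdown⟩)
  rcases eq_or_ne M.sum 0 with hM | hM
  · rw [sizeBiasedTest, hM, Nat.cast_zero, zero_pow two_ne_zero, zero_mul, zero_div, abs_zero]
    exact hC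
  have hnonneg : 0 ≤ (M.sum : ℝ) ^ 2 * (1 - scaledParts M.sum M 0) :=
    mul_nonneg (sq_nonneg _) (sub_nonneg.2 (scaledParts_zero_le_one hM))
  have hle := sq_mul_one_sub_scaledParts_le_pairMass hM
  rw [sizeBiasedTest, ← mul_assoc, abs_div, abs_mul, abs_of_nonneg hnonneg,
    abs_of_nonneg (hnonneg.trans hle)]
  refine div_le_of_le_mul₀ (hnonneg.trans hle) hC ?_
  rw [mul_comm]
  exact mul_le_mul (hf _) hle hnonneg hC

theorem pairMass_mul_sizeBiasedTest {M : Multiset ℕ} (hM : M.sum ≠ 0) :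
    pairMass M * sizeBiasedTest f M.sum M = (M.sum : ℝ) ^ 2 *
      ((1 - scaledParts M.sum M 0) * f (toSdown (scaledParts M.sum M))) := by
  rw [sizeBiasedTest]
  refine mul_div_cancel_of_imp' fun hzero => ?_
  have hle := sq_mul_one_sub_scaledParts_le_pairMass hM
  have hnonneg : 0 ≤ (M.sum : ℝ) ^ 2 * (1 - scaledParts M.sum M 0) :=
    mul_nonneg (sq_nonneg _) (sub_nonneg.2 (scaledParts_zero_le_one hM))
  rw [← mul_assoc, hnonneg.antisymm' (hzero ▸ hle), zero_mul]

theorem limitProfile_one_sub (f : Sdown → ℝ) (x : ℝ) :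
    limitProfile f (1 - x) = limitProfile f x := by
  rw [limitProfile, limitProfile, sub_sub_cancel, max_comm, mul_comm x]

variable {a b : ℕ → ℕ} {μ : Multiset ℕ} {x : ℝ}

theorem tendsto_sizeBiasedTest_of_half_lt (hf : Continuous f) (hx : x ∈ Ioo (1 / 2) 1)
    (ha : Tendsto (fun n => (a n : ℝ) / n) atTop (nhds x))
    (hb : Tendsto (fun n => (b n : ℝ) / n) atTop (nhds (1 - x)))
    (hsum : ∀ᶠ n in atTop, (a n ::ₘ b n ::ₘ μ).sum = n) :
    Tendsto (fun n => sizeBiasedTest f n (a n ::ₘ b n ::ₘ μ)) atTop (nhds (limitProfile f x)) := by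
  have hx0 : 0 < x := one_half_pos.trans hx.1
  have hparts := tendsto_scaledParts_cons_cons (μ := μ) hx ha hb
  have hmem : ∀ᶠ n in atTop, scaledParts n (a n ::ₘ b n ::ₘ μ) ∈ Sdown := by
    filter_upwards [hsum, eventually_ne_atTop 0] with n hn h0
    have h := scaledParts_mem_Sdown (hn.trans_ne h0)
    rwa [hn] at h
  have hprofile := (((tendsto_pi_nhds.1 hparts 0).const_sub 1).mul ((hf.tendsto _).comp
    (tendsto_toSdown hmem (pairSeq_mem_Sdown (Ioo_subset_Icc_self hx)) hparts))).div
    (tendsto_pairMass_cons_cons_div ha hb hsum)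
    (mul_pos two_pos (mul_pos hx0 (sub_pos.2 hx.2))).ne'
  rw [limitProfile, max_eq_left (by linarith [hx.1])]
  refine hprofile.congr fun n => ?_
  rw [sizeBiasedTest, mul_comm ((n : ℝ) ^ 2)]
  exact div_div_eq_mul_div _ _ _

theorem tendsto_sizeBiasedTest (hf : Continuous f) (hx : x ∈ Ioo 0 1) (hx2 : x ≠ 1 / 2)
    (ha : Tendsto (fun n => (a n : ℝ) / n) atTop (nhds x))
    (hb : Tendsto (fun n => (b n : ℝ) / n) atTop (nhds (1 - x)))
    (hsum : ∀ᶠ n in atTop, (a n ::ₘ b n ::ₘ μ).sum = n) :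
    Tendsto (fun n => sizeBiasedTest f n (a n ::ₘ b n ::ₘ μ)) atTop (nhds (limitProfile f x)) := by
  rcases hx2.lt_or_gt with hlt | hgt
  · have hswap (n : ℕ) := Multiset.cons_swap (a n) (b n) μ
    simp only [hswap] at hsum ⊢
    rw [← limitProfile_one_sub]
    exact tendsto_sizeBiasedTest_of_half_lt hf ⟨by linarith, by linarith [hx.1]⟩ hb
      (by rwa [sub_sub_cancel]) hsum
  · exact tendsto_sizeBiasedTest_of_half_lt hf ⟨hgt, hx.2⟩ ha hb hsum

theorem integral_eq_two_mul_of_symmetric {F : ℝ → ℝ} (hF : ∀ x, F (1 - x) = F x) :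
    ∫ x in (0 : ℝ)..1, F x = 2 * ∫ x in (1 / 2 : ℝ)..1, F x := by
  have hhalf : IntervalIntegrable F volume (1 / 2) 1 → IntervalIntegrable F volume 0 (1 / 2) := by
    intro h
    have hreflect := (h.comp_sub_left 1).symm
    simp only [hF] at hreflect
    norm_num at hreflect ⊢
    exact hreflect
  by_cases h : IntervalIntegrable F volume (1 / 2) 1
  · rw [← intervalIntegral.integral_add_adjacent_intervals (hhalf h) h, two_mul]
    have hreflect := intervalIntegral.integral_comp_sub_left (a := 0) (b := 1 / 2) F 1
    simp only [hF] at hreflect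
    rw [hreflect, sub_zero, sub_half]
  · have hfull : ¬ IntervalIntegrable F volume 0 1 := fun h01 => h (h01.mono_set (by
      rw [uIcc_of_le (by norm_num), uIcc_of_le zero_le_one]
      exact Icc_subset_Icc_left (by norm_num)))
    rw [intervalIntegral.integral_undef h, intervalIntegral.integral_undef hfull, mul_zero]

theorem rpow_neg_three_div_two {y : ℝ} (hy : 0 < y) : y ^ (-(3 : ℝ) / 2) = y⁻¹ * (√y)⁻¹ := by
  rw [sqrt_eq_rpow, ← rpow_neg hy.le, ← rpow_neg_one y, ← rpow_add hy]
  norm_num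

theorem integral_inv_sqrt_mul_limitProfile (f : Sdown → ℝ) :
    ∫ x in (0 : ℝ)..1, (√(x * (1 - x)))⁻¹ * limitProfile f x
      = ∫ x in Ioc (1 / 2 : ℝ) 1, (1 - x) * f (toSdown (pairSeq x)) * x ^ (-(3 : ℝ) / 2) *
          (1 - x) ^ (-(3 : ℝ) / 2) := by
  rw [integral_eq_two_mul_of_symmetric fun x => by
      rw [limitProfile_one_sub, sub_sub_cancel, mul_comm x], ← intervalIntegral.integral_const_mul,
    intervalIntegral.integral_of_le (by norm_num), integral_Ioc_eq_integral_Ioo,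
    integral_Ioc_eq_integral_Ioo]
  refine setIntegral_congr_fun measurableSet_Ioo fun x hx => ?_
  have h0 : 0 < x := one_half_pos.trans hx.1
  have h1 : 0 < 1 - x := sub_pos.2 hx.2
  rw [limitProfile, max_eq_left (by linarith [hx.1]), rpow_neg_three_div_two h0,
    rpow_neg_three_div_two h1, sqrt_mul h0.le]
  field_simp

end SizeBiasedTest

section ScalingLimit

theorem tendsto_natCast_sub_div (k : ℕ) :
    Tendsto (fun n : ℕ => ((n - k : ℕ) : ℝ) / n) atTop (nhds 1) := by
  have h := (tendsto_const_div_atTop_nhds_zero_nat (k : ℝ)).const_sub 1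
  rw [sub_zero] at h
  refine h.congr' ?_
  filter_upwards [eventually_ge_atTop k, eventually_ne_atTop 0] with n hkn hn
  rw [Nat.cast_sub hkn, sub_div, div_self (Nat.cast_ne_zero.2 hn)]

theorem tendsto_sqrt_div_sq_mul {w : ℕ → ℝ} {c : ℝ} (hc0 : c ≠ 0)
    (hc : Tendsto (fun n : ℕ => √n * (n * w n)) atTop (nhds c)) :
    Tendsto (fun n : ℕ => √n / (n ^ 2 * w (n + 1))) atTop (nhds c⁻¹) := by
  have hratio : Tendsto (fun n : ℕ => (n : ℝ) / (n + 1)) atTop (nhds 1) :=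
    tendsto_natCast_div_add_atTop 1
  have hlim := ((hc.comp (tendsto_add_atTop_nat 1)).mul hratio).mul hratio.sqrt
  rw [sqrt_one, mul_one, mul_one] at hlim
  refine (hlim.inv₀ hc0).congr' ?_
  filter_upwards [eventually_gt_atTop 0] with n hn
  have hn' : (0 : ℝ) < n := Nat.cast_pos.2 hn
  have hroot : √(n : ℝ) * √n = n := mul_self_sqrt hn'.le
  have hroot0 : √(n : ℝ) ≠ 0 := (sqrt_pos.2 hn').ne'
  have hroot1 : √((n : ℝ) + 1) ≠ 0 := (sqrt_pos.2 (by positivity)).ne'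
  rw [Function.comp_apply, Nat.cast_succ, sqrt_div hn'.le, ← inv_div (_ * w (n + 1))]
  congr 1
  field_simp
  rw [sq, hroot, mul_comm]

theorem eventually_pos_of_tendsto_sqrt_mul {w : ℕ → ℝ} {c : ℝ} (hw : ∀ n, 0 ≤ w n) (hc0 : 0 < c)
    (hc : Tendsto (fun n : ℕ => √n * (n * w n)) atTop (nhds c)) : ∀ᶠ n in atTop, 0 < w n := by
  filter_upwards [hc.eventually_const_lt hc0] with n hn
  exact (hw n).lt_of_ne' fun h => by simp [h] at hn

theorem prod_range_factorial_count {M : Multiset ℕ} {n : ℕ} (hM : M.sum ≤ n) :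
    ∏ i ∈ Finset.range (n + 1), (M.count i).factorial
      = ∏ i ∈ M.toFinset, (M.count i).factorial := by
  symm
  refine Finset.prod_subset (fun i hi => ?_) fun i _ hi => ?_
  · have := Multiset.le_sum_of_mem (Multiset.mem_toFinset.1 hi)
    exact Finset.mem_range_succ_iff.2 (this.trans hM)
  · rw [Multiset.count_eq_zero_of_notMem (mt Multiset.mem_toFinset.2 hi), Nat.factorial_zero]

theorem orderingWeight_eq_factorial_div (w : ℕ → ℝ) {n : ℕ} (lam : Nat.Partition n) :
    orderingWeight w lam.parts = (Multiset.card lam.parts).factorial /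
      (∏ i ∈ Finset.range (n + 1), ((lam.parts.count i).factorial : ℝ)) *
        (lam.parts.map w).prod := by
  have hne : ∏ i ∈ lam.parts.toFinset, ((lam.parts.count i).factorial : ℝ) ≠ 0 :=
    Finset.prod_ne_zero_iff.2 fun i _ => Nat.cast_ne_zero.2 (Nat.factorial_ne_zero _)
  rw [orderingWeight, ← prod_factorial_count_mul_countPerms, ← Nat.cast_prod,
    prod_range_factorial_count lam.parts_sum.le, Nat.cast_mul, Nat.cast_prod,
    mul_div_cancel_left₀ _ hne]

variable {η w : ℕ → ℝ} {c s C : ℝ} {f : Sdown → ℝ}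

theorem tendsto_pairConvolution_sizeBiasedTest
    (hc : Tendsto (fun n : ℕ => √n * (n * w n)) atTop (nhds c)) (hf : Continuous f)
    (hC : ∀ s, |f s| ≤ C) (μ : Multiset ℕ) :
    Tendsto (fun n => pairConvolution w (sizeBiasedTest f n) n μ) atTop
      (nhds (c ^ 2 * ∫ x in (0 : ℝ)..1, (√(x * (1 - x)))⁻¹ * limitProfile f x)) := by
  have hm : Tendsto (fun n => n - μ.sum) atTop atTop := tendsto_sub_atTop_nat _
  have hrescale {q : ℕ → ℕ} {y : ℝ}
      (h : Tendsto (fun n => (q n : ℝ) / (n - μ.sum : ℕ)) atTop (nhds y)) :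
      Tendsto (fun n => (q n : ℝ) / n) atTop (nhds y) := by
    have hlim := h.mul (tendsto_natCast_sub_div μ.sum)
    rw [mul_one] at hlim
    refine hlim.congr' ?_
    filter_upwards [hm.eventually_ne_atTop 0] with n hn
    exact div_mul_div_cancel₀ (Nat.cast_ne_zero.2 hn)
  have hsum {n : ℕ} {y : ℕ × ℕ} (hn : μ.sum ≤ n) (hy : y.1 + y.2 = n - μ.sum) :
      (y.1 ::ₘ y.2 ::ₘ μ).sum = n := by
    rw [Multiset.sum_cons, Multiset.sum_cons]
    omega
  refine (tendsto_sum_antidiagonal_mul (v := fun n => n * w n) (C := C) (g := limitProfile f)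
    (G := fun n y => sizeBiasedTest f n (y.1 ::ₘ y.2 ::ₘ μ)) (by simp) hc hm ?_ ?_).congr' ?_
  · filter_upwards [eventually_ge_atTop μ.sum] with n hn y hy
    have h := abs_sizeBiasedTest_le hC (y.1 ::ₘ y.2 ::ₘ μ)
    rwa [hsum hn (Finset.HasAntidiagonal.mem_antidiagonal.1 hy)] at h
  · filter_upwards [Measure.ae_ne volume (1 / 2)] with x hx2 hx a ham ha
    refine tendsto_sizeBiasedTest hf hx hx2 (hrescale ha) (hrescale (tendsto_sub_div hm ham ha)) ?_
    filter_upwards [eventually_ge_atTop μ.sum] with n hn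
    exact hsum (y := (a n, n - μ.sum - a n)) hn (Nat.add_sub_cancel' (ham n))
  · filter_upwards [eventually_ge_atTop μ.sum] with n hn
    exact (if_pos hn).symm

theorem exists_abs_pairConvolution_le
    (hc : Tendsto (fun n : ℕ => √n * (n * w n)) atTop (nhds c)) :
    ∃ K, ∀ (n : ℕ) (g : Multiset ℕ → ℝ) (C : ℝ), (∀ M, M.sum = n → |g M| ≤ C) →
      ∀ μ, |pairConvolution w g n μ| ≤ K * C := by
  obtain ⟨K, hK⟩ := exists_sum_antidiagonal_abs_le (v := fun n => n * w n) (by simp) hc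
  refine ⟨K, fun n g C hg μ => ?_⟩
  have hC : 0 ≤ C := (abs_nonneg _).trans (hg {n} (Multiset.sum_singleton n))
  rw [pairConvolution]
  split_ifs with hn
  · refine (Finset.abs_sum_le_sum_abs _ _).trans ((Finset.sum_le_sum fun y hy => ?_).trans
      ((Finset.sum_mul _ _ C).symm.trans_le (mul_le_mul_of_nonneg_right (hK (n - μ.sum)) hC)))
    rw [abs_mul]
    refine mul_le_mul_of_nonneg_left (hg _ ?_) (abs_nonneg _)
    rw [Finset.HasAntidiagonal.mem_antidiagonal] at hy
    rw [Multiset.sum_cons, Multiset.sum_cons]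
    omega
  · rw [abs_zero]
    exact mul_nonneg ((Finset.sum_nonneg fun y _ => abs_nonneg _).trans (hK 0)) hC

theorem tendsto_tsum_residualWeight_mul (hη : ∀ i, 0 ≤ η i) (hw : ∀ i, 0 ≤ w i)
    (hW : HasSum (residualWeight η w) s)
    (hc : Tendsto (fun n : ℕ => √n * (n * w n)) atTop (nhds c)) (hf : Continuous f)
    (hC : ∀ s, |f s| ≤ C) :
    Tendsto (fun n => ∑' μ, residualWeight η w μ * pairConvolution w (sizeBiasedTest f n) n μ) atTop
      (nhds (s * (c ^ 2 * ∫ x in (0 : ℝ)..1, (√(x * (1 - x)))⁻¹ * limitProfile f x))) := by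
  obtain ⟨K, hK⟩ := exists_abs_pairConvolution_le hc
  have hbound (n : ℕ) (μ : Multiset ℕ) : |pairConvolution w (sizeBiasedTest f n) n μ| ≤ K * C :=
    hK n _ C (fun M hM => hM ▸ abs_sizeBiasedTest_le hC M) μ
  rw [← (hW.mul_right _).tsum_eq]
  refine tendsto_tsum_of_dominated_convergence (hW.summable.mul_right (K * C))
    (fun μ => (tendsto_pairConvolution_sizeBiasedTest hc hf hC μ).const_mul _)
    (Eventually.of_forall fun n μ => ?_)
  rw [Real.norm_eq_abs, abs_mul, abs_of_nonneg (residualWeight_nonneg hη hw μ)]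
  exact mul_le_mul_of_nonneg_left (hbound n μ) (residualWeight_nonneg hη hw μ)

theorem sq_mul_sum_partition (hη : ∀ i, 0 ≤ η i) (hw : ∀ i, 0 ≤ w i) (hw0 : w 0 = 0)
    (hW : Summable (residualWeight η w)) (hC : ∀ s, |f s| ≤ C) {n : ℕ} (hn : n ≠ 0) :
    (n : ℝ) ^ 2 * ∑ lam : Nat.Partition n, η (Multiset.card lam.parts) *
        orderingWeight w lam.parts * (1 - partVec n lam 0) * f (toSdown (partVec n lam))
      = ∑' μ, residualWeight η w μ * pairConvolution w (sizeBiasedTest f n) n μ := by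
  rw [← sum_partition_mul_pairMass hη hw hw0 hW fun M hM => hM ▸ abs_sizeBiasedTest_le hC M,
    Finset.mul_sum]
  refine Finset.sum_congr rfl fun lam _ => ?_
  have h := pairMass_mul_sizeBiasedTest (f := f) (lam.parts_sum.trans_ne hn)
  rw [lam.parts_sum] at h
  rw [partVec_eq_scaledParts]
  linear_combination -η (Multiset.card lam.parts) * orderingWeight w lam.parts * h

theorem tendsto_sqrt_mul_sum_partition (hη : ∀ i, 0 ≤ η i) (hw : ∀ i, 0 ≤ w i) (hw0 : w 0 = 0)
    (hW : HasSum (residualWeight η w) s) (hc0 : 0 < c)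
    (hc : Tendsto (fun n : ℕ => √n * (n * w n)) atTop (nhds c))
    {p : ∀ n, Nat.Partition n → ℝ}
    (hp : ∀ n, 0 < w (n + 1) → ∀ lam,
      p n lam = η (Multiset.card lam.parts) * orderingWeight w lam.parts / w (n + 1))
    (hf : Continuous f) (hC : ∀ s, |f s| ≤ C) :
    Tendsto (fun n : ℕ => √n * ∑ lam : Nat.Partition n,
        p n lam * (1 - partVec n lam 0) * f (toSdown (partVec n lam))) atTop
      (nhds (c⁻¹ * (s * (c ^ 2 *
        ∫ x in (0 : ℝ)..1, (√(x * (1 - x)))⁻¹ * limitProfile f x)))) := by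
  have hpos := (tendsto_add_atTop_nat 1).eventually (eventually_pos_of_tendsto_sqrt_mul hw hc0 hc)
  refine ((tendsto_sqrt_div_sq_mul hc0.ne' hc).mul
    (tendsto_tsum_residualWeight_mul hη hw hW hc hf hC)).congr' ?_
  filter_upwards [hpos, eventually_ne_atTop 0] with n hn h0
  have hn' : (n : ℝ) ≠ 0 := Nat.cast_ne_zero.2 h0
  have hterm (lam : Nat.Partition n) :
      p n lam * (1 - partVec n lam 0) * f (toSdown (partVec n lam))
        = η (Multiset.card lam.parts) * orderingWeight w lam.parts * (1 - partVec n lam 0) *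
          f (toSdown (partVec n lam)) / w (n + 1) := by
    rw [hp n hn]
    ring
  rw [← sq_mul_sum_partition hη hw hw0 hW.summable hC h0,
    Finset.sum_congr rfl fun lam _ => hterm lam, ← Finset.sum_div]
  field_simp

theorem inv_mul_sq_mul_sq_one_div {σ : ℝ} (hσ : 0 < σ) (I : ℝ) :
    (1 / (σ * √(2 * π)))⁻¹ * (σ ^ 2 * ((1 / (σ * √(2 * π))) ^ 2 * I))
      = σ / 2 * (√2 / √π) * I := by
  rw [sqrt_mul zero_le_two]
  have hπ : √π ≠ 0 := (sqrt_pos.2 pi_pos).ne'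
  have h2 : √(2 : ℝ) ^ 2 = 2 := sq_sqrt zero_le_two
  field_simp
  rw [h2, mul_comm]

end ScalingLimit

/-- Lemma for Aldous' theorem via Markov-Branching trees: let `η` be a
critical offspring distribution with variance `σ² ∈ (0,∞)`, aperiodic, with `η(1) < 1`;
let `w(n) = (1/n)·ℙ(Sₙ = −1)` (the probability that a `η`-Galton–Watson tree has `n`
vertices, by the Otter–Dwass formula), and let `(pₙ)` be the splitting distributions
`pₙ(λ) = η(p(λ))·(p(λ)!/∏ᵢ mᵢ(λ)!)·(∏ⱼ w(λⱼ))/w(n+1)`. Then `(pₙ)` satisfies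
Hypothesis (H) with `γ = 1/2` and `ν = (σ/2)·ν_Br`: for every bounded continuous
`f : 𝒮↓ → ℝ`, `√n·Σ_{λ∈𝒫ₙ} pₙ(λ)(1−λ₁/n)f(λ/n)` converges to
`(σ/2)·(√2/√π)·∫_{1/2}^{1}(1−x)·f((x,1−x,0,…))·x^{−3/2}(1−x)^{−3/2} dx`. -/
theorem stmt11 {Ω : Type*} [MeasurableSpace Ω] (P : Measure Ω) [IsProbabilityMeasure P]
    (η : ℕ → ℝ) (hη0 : ∀ i, 0 ≤ η i) (hηsum : HasSum η 1) (hη1 : η 1 < 1)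
    (hmean : HasSum (fun i : ℕ => (i : ℝ) * η i) 1)
    (σ : ℝ) (hσ : 0 < σ)
    (hvar : HasSum (fun i : ℕ => ((i : ℝ) - 1) ^ 2 * η i) (σ ^ 2))
    (haper : ¬ ∃ (a : ℤ) (d : ℤ), 2 ≤ d ∧ ∀ i : ℕ, η i ≠ 0 → d ∣ ((i : ℤ) - 1 - a))
    (ξ : ℕ → Ω → ℤ) (hmeas : ∀ i, Measurable (ξ i))
    (hindep : ProbabilityTheory.iIndepFun ξ P)
    (hlaw : ∀ i : ℕ, ∀ j : ℕ, P {ω | ξ i ω = (j : ℤ) - 1} = ENNReal.ofReal (η j))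
    (w : ℕ → ℝ)
    (hw : ∀ n : ℕ, w n = (P {ω | (∑ i ∈ Finset.range n, ξ i ω) = -1}).toReal / n)
    (p : ∀ n, Nat.Partition n → ℝ)
    (hp : ∀ n : ℕ, 0 < w (n + 1) → ∀ lam : Nat.Partition n,
      p n lam = η (Multiset.card lam.parts) *
        ((Nat.factorial (Multiset.card lam.parts) : ℝ) /
          ∏ i ∈ Finset.range (n + 1), (Nat.factorial (lam.parts.count i) : ℝ)) *
        (lam.parts.map w).prod / w (n + 1)) :
    ∀ f : ↥Sdown → ℝ, Continuous f → (∃ C, ∀ s, |f s| ≤ C) →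
      Tendsto (fun n : ℕ => Real.sqrt n * ∑ lam : Nat.Partition n,
          p n lam * (1 - partVec n lam 0) * f (toSdown (partVec n lam)))
        atTop
        (nhds ((σ / 2) * (Real.sqrt 2 / Real.sqrt π) *
          ∫ x in Set.Ioc (1/2 : ℝ) 1,
            (1 - x) * f (toSdown (pairSeq x)) * x ^ (-(3:ℝ)/2) * (1 - x) ^ (-(3:ℝ)/2))) := by
  rintro f hf ⟨C, hC⟩
  obtain rfl : w = hittingWeight η 1 := funext fun n => (hw n).trans <|
    measureReal_sum_range_eq_neg_one_div hη0 hηsum hmeas hindep hlaw n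
  have hw0 := hittingWeight_nonneg hη0 1
  have hwsum := hasSum_hittingWeight_one hη0 hηsum hη1 hmean
  have hlocal := tendsto_sqrt_mul_mul_hittingWeight hη0 hηsum hmeas hindep hlaw hmean hσ hvar haper
  have hresidual := hasSum_residualWeight hη0 hηsum hmean hvar hw0 hwsum
  have hp' (n : ℕ) (hn : 0 < hittingWeight η 1 (n + 1)) (lam : Nat.Partition n) :
      p n lam = η (Multiset.card lam.parts) * orderingWeight (hittingWeight η 1) lam.parts /
        hittingWeight η 1 (n + 1) := by
    rw [hp n hn, mul_assoc (η _), orderingWeight_eq_factorial_div]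
  have hlim := tendsto_sqrt_mul_sum_partition hη0 hw0 (hittingWeight_of_lt η one_pos) hresidual
    (by positivity) hlocal hp' hf hC
  rwa [inv_mul_sq_mul_sq_one_div hσ, integral_inv_sqrt_mul_limitProfile] at hlim
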